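/- Let C = ⟨A, B, Q, q0, D, δ, dist, K, col⟩ be a finite stochastic concurrent arena that is locally determined, and let W ⊆ K^ω be a Borel tail objective. If val_A = 1 or val_B = 0, then the game ⟨C, W⟩ is determined: val_A = val_B and there exist color strategies s_A, s_B with inf over all state strategies t_B of P^{s_A,t_B}(U_W) = val_A and sup over all state strategies t_A of P^{t_A,s_B}(U_W) = val_B. -/

import Mathlib

open MeasureTheory
open scoped Classical ENNReal

universe u

/-- The cylinder set generated by a finite word. -/
def Cyl {K : Type u} (w : List K) : Set (ℕ → K) :=
  {ρ | ∀ i : ℕ, ∀ h : i < w.length, ρ i = w.get ⟨i, h⟩}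

/-- The σ-algebra on `ℕ → K` generated by cylinder sets. -/
def BorelSeq (K : Type u) : MeasurableSpace (ℕ → K) :=
  MeasurableSpace.generateFrom {s | ∃ w : List K, s = Cyl w}

/-- A game form (given by its outcome function `ρ : S_A → S_B → O`) is determined. -/
def GFDetermined {SA SB O : Type u} (ρ : SA → SB → O) : Prop :=
  ∀ V : Set O, (∃ a, ∀ b, ρ a b ∈ V) ∨ (∃ b, ∀ a, ρ a b ∉ V)

/-- The color sequence of an infinite play. -/
def colorSeq {Q K : Type u} (col : Q → Q → K) (π : ℕ → Q) : ℕ → K :=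
  fun n => col (π n) (π (n + 1))

/-- The color history along the state history `h ++ [q]`. -/
def colHist {Q K : Type u} (col : Q → Q → K) : List Q → Q → List K
  | [], _ => []
  | [p], q => [col p q]
  | p :: p' :: r, q => col p p' :: colHist col (p' :: r) q

/-- The (deterministic) state strategy induced by a color strategy of Player A:
after state history `h` with current state `q`, play `sA` applied to the color
history and the current state. -/
noncomputable def toStratA {A Q K : Type u} (col : Q → Q → K)
    (sA : List K → Q → A) : List Q → Q → PMF A :=
  fun h q => PMF.pure (sA (colHist col h q) q)

/-- The (deterministic) state strategy induced by a color strategy of Player B. -/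
noncomputable def toStratB {B Q K : Type u} (col : Q → Q → K)
    (sB : List K → Q → B) : List Q → Q → PMF B :=
  fun h q => PMF.pure (sB (colHist col h q) q)

/-- The strict history `π_0 ⋯ π_{i-1}` before step `i` of a finite play
`π : Fin (k+1) → Q`. -/
def histOf {Q : Type u} {k : ℕ} (π : Fin (k + 1) → Q) (i : Fin k) : List Q :=
  List.ofFn (fun j : Fin (i : ℕ) => π (Fin.castLE (Nat.le_succ_of_le i.isLt.le) j))

/-- The set of plays whose color sequence lies in `W`. -/
def UW {Q K : Type u} (col : Q → Q → K) (W : Set (ℕ → K)) : Set (ℕ → Q) :=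
  {π | colorSeq col π ∈ W}

/-- The value of Player A's color strategy `sA`: the infimum over Player B's state
strategies of the probability of `U`. -/
noncomputable def valSA {A B Q K : Type u} (col : Q → Q → K)
    (P : (List Q → Q → PMF A) → (List Q → Q → PMF B) →
      @Measure (ℕ → Q) (BorelSeq Q))
    (U : Set (ℕ → Q)) (sA : List K → Q → A) : ℝ≥0∞ :=
  ⨅ tB : List Q → Q → PMF B, P (toStratA col sA) tB U

/-- The value of Player B's color strategy `sB`: the supremum over Player A's state
strategies of the probability of `U`. -/
noncomputable def valSB {A B Q K : Type u} (col : Q → Q → K)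
    (P : (List Q → Q → PMF A) → (List Q → Q → PMF B) →
      @Measure (ℕ → Q) (BorelSeq Q))
    (U : Set (ℕ → Q)) (sB : List K → Q → B) : ℝ≥0∞ :=
  ⨆ tA : List Q → Q → PMF A, P tA (toStratB col sB) U

/-- The value of the game for Player A. -/
noncomputable def valA {A B Q K : Type u} (col : Q → Q → K)
    (P : (List Q → Q → PMF A) → (List Q → Q → PMF B) →
      @Measure (ℕ → Q) (BorelSeq Q))
    (U : Set (ℕ → Q)) : ℝ≥0∞ :=
  ⨆ sA : List K → Q → A, valSA col P U sA

/-- The value of the game for Player B. -/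
noncomputable def valB {A B Q K : Type u} (col : Q → Q → K)
    (P : (List Q → Q → PMF A) → (List Q → Q → PMF B) →
      @Measure (ℕ → Q) (BorelSeq Q))
    (U : Set (ℕ → Q)) : ℝ≥0∞ :=
  ⨅ sB : List K → Q → B, valSB col P U sB

/-- Prepending a finite word to an infinite sequence. -/
def prependWord {K : Type u} (w : List K) (ρ : ℕ → K) : ℕ → K :=
  fun i => if h : i < w.length then w.get ⟨i, h⟩ else ρ (i - w.length)

/-- `W` is a tail objective: membership is invariant under adding and removing
finite prefixes. -/
def TailObj {K : Type u} (W : Set (ℕ → K)) : Prop :=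
  ∀ (ρ : ℕ → K) (w : List K), ρ ∈ W ↔ prependWord w ρ ∈ W

/-!
Fix a strategy of Player A. The capacity of the losing plays, the least initial value of a function
on histories that is a supermartingale under every action of Player B and reaches `1` on every
losing play, is bounded by the probability of losing that Player B can force: for compact sets he
plays greedily, and Choquet's theorem reduces Borel sets to compact ones. A nearly optimal such
function still works after it is minimized over the finitely many state histories with the same
colors, since by compactness it reaches `1` uniformly along each losing color sequence. So if
Player A wins with probability arbitrarily close to `1`, there are color-based potentials `G` of
arbitrarily small initial value at `q0` that are eventually at least `1` on losing color sequences.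

As `W` is a tail objective, Player A may forget the colors seen so far and start again with `G`
whenever it has become large. Among all ways to time these resets she follows the one that minimizes
the number of resets plus the rescaled current value of `G`. This cost is a supermartingale for the
color strategy so obtained, whatever Player B does, and it tends to infinity on losing plays because
there the potential is never below the reset threshold for long. By Fatou's lemma losing has
probability zero. The case `val_B = 0` is the same with the players exchanged and `W` complemented.
-/

open Filter Topology PiNat

section Expectation

variable {Q R : Type*}

/-- The expectation of an extended nonnegative function under a probability mass function. -/
noncomputable def expect (μ : PMF Q) (f : Q → ℝ≥0∞) : ℝ≥0∞ := ∑' q, μ q * f q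

theorem expect_mono_of_support {μ : PMF Q} {f g : Q → ℝ≥0∞} (hfg : ∀ q ∈ μ.support, f q ≤ g q) :
    expect μ f ≤ expect μ g := by
  refine ENNReal.tsum_le_tsum fun q => ?_
  by_cases hq : μ q = 0
  · simp [hq]
  · gcongr
    exact hfg q hq

theorem expect_mono {μ : PMF Q} {f g : Q → ℝ≥0∞} (hfg : ∀ q, f q ≤ g q) :
    expect μ f ≤ expect μ g :=
  expect_mono_of_support fun q _ => hfg q

theorem expect_const (μ : PMF Q) (c : ℝ≥0∞) : expect μ (fun _ => c) = c := by
  rw [expect, ENNReal.tsum_mul_right, μ.tsum_coe, one_mul]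

theorem expect_add (μ : PMF Q) (f g : Q → ℝ≥0∞) :
    expect μ (fun q => f q + g q) = expect μ f + expect μ g := by
  simp only [expect, mul_add, ENNReal.tsum_add]

theorem expect_const_mul (μ : PMF Q) (c : ℝ≥0∞) (f : Q → ℝ≥0∞) :
    expect μ (fun q => c * f q) = c * expect μ f := by
  simp only [expect, mul_left_comm _ c, ENNReal.tsum_mul_left]

theorem expect_tsum {ι : Type*} (μ : PMF Q) (f : ι → Q → ℝ≥0∞) :
    expect μ (fun q => ∑' i, f i q) = ∑' i, expect μ (f i) := by
  simp only [expect, ← ENNReal.tsum_mul_left]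
  exact ENNReal.tsum_comm

theorem expect_iSup_of_monotone {ι : Type*} [Preorder ι] [IsDirectedOrder ι] (μ : PMF Q)
    {f : ι → Q → ℝ≥0∞} (hf : Monotone f) :
    expect μ (fun q => ⨆ i, f i q) = ⨆ i, expect μ (f i) := by
  have hterm : ∀ q, Monotone fun i => μ q * f i q := fun q i j hij => by
    dsimp only
    gcongr
    exact hf hij q
  simp only [expect, ENNReal.mul_iSup, ENNReal.tsum_eq_iSup_sum,
    ENNReal.finsetSum_iSup_of_monotone hterm]
  exact iSup_comm

theorem expect_pure (q : Q) (f : Q → ℝ≥0∞) : expect (PMF.pure q) f = f q := by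
  rw [expect, tsum_eq_single q fun p hp => by simp [PMF.pure_apply, hp]]
  simp

theorem expect_bind (μ : PMF Q) (ν : Q → PMF R) (f : R → ℝ≥0∞) :
    expect (μ.bind ν) f = expect μ fun q => expect (ν q) f := by
  simp only [expect, PMF.bind_apply, ← ENNReal.tsum_mul_left, ← ENNReal.tsum_mul_right, mul_assoc]
  exact ENNReal.tsum_comm

end Expectation

section Histories

variable {Q : Type*}

theorem res_add (x : ℕ → Q) (m n : ℕ) : res x (m + n) = res (fun i => x (m + i)) n ++ res x m := by
  induction n with
  | zero => rfl
  | succ n ih => rw [← add_assoc, res_succ, ih, res_succ, List.cons_append]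

theorem reverse_res (x : ℕ → Q) (n : ℕ) : (res x n).reverse = List.ofFn fun i : Fin n => x i := by
  induction n with
  | zero => rfl
  | succ n ih => rw [res_succ, List.reverse_cons, ih, List.ofFn_succ', List.concat_eq_append]; rfl

theorem res_suffix_res (x : ℕ → Q) {m n : ℕ} (hmn : m ≤ n) : res x m <:+ res x n := by
  obtain ⟨k, rfl⟩ := Nat.exists_eq_add_of_le hmn
  exact ⟨_, (res_add x m k).symm⟩

theorem res_length_eq_of_suffix {x : ℕ → Q} {n : ℕ} {h : List Q} (hh : h <:+ res x n) :
    res x h.length = h := by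
  have hlen : h.length ≤ n := by simpa using hh.length_le
  exact ((List.suffix_of_suffix_length_le (res_suffix_res x hlen) hh (by simp)).eq_of_length
    (by simp))

/-- The plays whose history after `h.length` steps is `h`. Histories are lists with the most recent
state first, as produced by `PiNat.res`. -/
def histCyl (h : List Q) : Set (ℕ → Q) := {x | res x h.length = h}

theorem res_mem_histCyl (x : ℕ → Q) (n : ℕ) : x ∈ histCyl (res x n) := by
  simp [histCyl]

theorem histCyl_nil : histCyl ([] : List Q) = Set.univ := by
  simp [histCyl]

theorem mem_histCyl_cons {x : ℕ → Q} {q : Q} {h : List Q} :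
    x ∈ histCyl (q :: h) ↔ x h.length = q ∧ x ∈ histCyl h := by
  simp [histCyl]

theorem mem_histCyl_reverse {x : ℕ → Q} {w : List Q} :
    x ∈ histCyl w.reverse ↔ ∀ i, ∀ hi : i < w.length, x i = w[i] := by
  rw [histCyl, Set.mem_ofPred_eq, ← List.reverse_inj, reverse_res, List.reverse_reverse,
    List.ext_get_iff]
  simp

theorem histCyl_eq_iUnion (h : List Q) : histCyl h = ⋃ q, histCyl (q :: h) := by
  ext x
  simp [mem_histCyl_cons]

theorem isOpen_setOf_res [TopologicalSpace Q] [DiscreteTopology Q] (T : List Q → Prop) (n : ℕ) :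
    IsOpen {x | T (res x n)} := by
  refine isOpen_iff_mem_nhds.2 fun x hx => ?_
  filter_upwards [(isOpen_cylinder (fun _ => Q) x n).mem_nhds (self_mem_cylinder x n)] with y hy
  rw [cylinder_eq_res] at hy
  exact (show res y n = res x n from hy) ▸ hx

theorem isClosed_setOf_res [TopologicalSpace Q] [DiscreteTopology Q] (T : List Q → Prop) (n : ℕ) :
    IsClosed {x | T (res x n)} :=
  isOpen_compl_iff.1 (isOpen_setOf_res (fun h => ¬T h) n)

end Histories

section BorelSigmaAlgebra

variable {Q K : Type u}

attribute [local instance] BorelSeq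

theorem Cyl_eq_histCyl (w : List Q) : Cyl w = histCyl w.reverse := by
  ext x
  simp [Cyl, mem_histCyl_reverse]

theorem res_prependWord (w : List K) (x : ℕ → K) (n : ℕ) :
    res (prependWord w.reverse x) (w.length + n) = res x n ++ w := by
  have hhead : prependWord w.reverse x ∈ histCyl w := by
    rw [← w.reverse_reverse, mem_histCyl_reverse, w.reverse_reverse]
    intro i hi
    simp [prependWord, List.length_reverse ▸ hi]
  have htail : (fun i => prependWord w.reverse x (w.length + i)) = x := by
    ext i
    simp [prependWord]
  rw [res_add, htail, show res _ w.length = w from hhead]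

theorem prependWord_reverse_res (x : ℕ → K) (n : ℕ) :
    prependWord (res x n).reverse (fun i => x (n + i)) = x := by
  ext i
  by_cases hi : i < n
  · simp [prependWord, reverse_res, hi]
  · simp [prependWord, hi, Nat.add_sub_cancel' (not_lt.1 hi)]

theorem TailObj.shift_mem_iff {W : Set (ℕ → K)} (htail : TailObj W) (x : ℕ → K) (n : ℕ) :
    (fun i => x (n + i)) ∈ W ↔ x ∈ W := by
  rw [htail _ (res x n).reverse, prependWord_reverse_res]

theorem exists_res_eq [Nonempty Q] (h : List Q) : ∃ x : ℕ → Q, res x h.length = h :=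
  ⟨prependWord h.reverse fun _ => Classical.arbitrary Q, res_prependWord h _ 0⟩

theorem measurableSet_histCyl (h : List Q) : MeasurableSet (histCyl h) :=
  MeasurableSpace.measurableSet_generateFrom ⟨h.reverse, by
    rw [Cyl_eq_histCyl, List.reverse_reverse]⟩

theorem measurableSet_setOf_res [Countable Q] (T : List Q → Prop) (n : ℕ) :
    MeasurableSet {x : ℕ → Q | T (res x n)} := by
  have hunion : {x : ℕ → Q | T (res x n)} = ⋃ h ∈ {h : List Q | T h ∧ h.length = n}, histCyl h := by
    ext x
    simp only [Set.mem_ofPred_eq, Set.mem_iUnion]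
    refine ⟨fun hx => ⟨res x n, ⟨hx, by simp⟩, res_mem_histCyl x n⟩, ?_⟩
    rintro ⟨h, ⟨hT, rfl⟩, hx⟩
    rwa [show res x h.length = h from hx]
  rw [hunion]
  exact .biUnion (Set.to_countable _) fun h _ => measurableSet_histCyl h

theorem measurable_comp_res [Countable Q] (f : List Q → ℝ≥0∞) (n : ℕ) :
    Measurable fun x : ℕ → Q => f (res x n) :=
  fun s _ => measurableSet_setOf_res (fun h => f h ∈ s) n

theorem analyticSet_of_measurableSet_borelSeq [Countable Q] [TopologicalSpace Q]
    [DiscreteTopology Q] {E : Set (ℕ → Q)} (hE : MeasurableSet E) : AnalyticSet E := by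
  have hle : BorelSeq Q ≤ borel (ℕ → Q) := by
    refine MeasurableSpace.generateFrom_le ?_
    rintro _ ⟨w, rfl⟩
    exact MeasurableSpace.measurableSet_generateFrom
      (Cyl_eq_histCyl w ▸ isOpen_setOf_res (fun h => h = w.reverse) _)
  borelize (ℕ → Q)
  have : PolishSpace Q := inferInstance
  exact (hle E hE).analyticSet

end BorelSigmaAlgebra

section FirstHit

variable {Q : Type*} {H : List Q → Prop} {h x y : List Q}

/-- The shortest initial segment of the history `h` that satisfies `H`. Histories are stored with
the most recent state first, so initial segments are suffixes. -/
noncomputable def firstHit (H : List Q → Prop) (h : List Q) : Option (List Q) :=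
  h.tails.reverse.find? fun x => H x

theorem firstHit_cons (q : Q) :
    firstHit H (q :: h) = (firstHit H h).or (if H (q :: h) then some (q :: h) else none) := by
  simp [firstHit, List.find?_append, List.find?_singleton]

theorem firstHit_spec (hy : firstHit H h = some y) : H y := by
  simpa using List.find?_some hy

theorem firstHit_suffix (hy : firstHit H h = some y) : y <:+ h := by
  simpa using List.mem_of_find?_eq_some hy

theorem exists_firstHit (hh : H h) : ∃ y, firstHit H h = some y :=
  Option.isSome_iff_exists.1 (List.find?_isSome.2 ⟨h, by simp, by simpa using hh⟩)

theorem firstHit_eq_some_of_suffix (hxh : x <:+ h) (hy : firstHit H x = some y) :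
    firstHit H h = some y := by
  obtain ⟨l, rfl⟩ := hxh
  induction l with
  | nil => exact hy
  | cons q l ih => rw [List.cons_append, firstHit_cons, ih, Option.some_or]

theorem firstHit_self (hy : firstHit H h = some y) : firstHit H y = some y := by
  obtain ⟨z, hz⟩ := exists_firstHit (firstHit_spec hy)
  rw [hz, ← firstHit_eq_some_of_suffix (firstHit_suffix hy) hz, hy]

/-- The function that follows `g` until `H` is first satisfied, and from that history `y` on
follows `G y`. -/
noncomputable def paste (H : List Q → Prop) (G : List Q → List Q → ℝ≥0∞) (g : List Q → ℝ≥0∞)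
    (h : List Q) : ℝ≥0∞ :=
  (firstHit H h).elim (g h) fun y => G y h

end FirstHit

section Excessive

variable {Q B : Type*} {κ : List Q → B → PMF Q} {g : List Q → ℝ≥0∞}

/-- `g` is a supermartingale on histories, whatever the actions in `B` chosen along the play. -/
def IsExcessive (κ : List Q → B → PMF Q) (g : List Q → ℝ≥0∞) : Prop :=
  ∀ h b, expect (κ h b) (fun q => g (q :: h)) ≤ g h

theorem isExcessive_const (c : ℝ≥0∞) : IsExcessive κ fun _ => c :=
  fun _ _ => (expect_const _ c).le

theorem IsExcessive.const_mul (hg : IsExcessive κ g) (c : ℝ≥0∞) :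
    IsExcessive κ fun h => c * g h := fun h b => by
  dsimp only
  rw [expect_const_mul]
  gcongr
  exact hg h b

theorem isExcessive_tsum {ι : Type*} {g : ι → List Q → ℝ≥0∞} (hg : ∀ i, IsExcessive κ (g i)) :
    IsExcessive κ fun h => ∑' i, g i h := fun h b => by
  rw [expect_tsum]
  exact ENNReal.tsum_le_tsum fun i => hg i h b

theorem isExcessive_iSup_of_monotone {ι : Type*} [Preorder ι] [IsDirectedOrder ι]
    {g : ι → List Q → ℝ≥0∞} (hmono : Monotone g) (hg : ∀ i, IsExcessive κ (g i)) :
    IsExcessive κ fun h => ⨆ i, g i h := fun h b => by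
  rw [expect_iSup_of_monotone _ fun i j hij q => hmono hij (q :: h)]
  exact iSup_mono fun i => hg i h b

theorem IsExcessive.paste {H : List Q → Prop} {G : List Q → List Q → ℝ≥0∞}
    (hg : IsExcessive κ g) (hG : ∀ y, H y → IsExcessive κ (G y)) (hle : ∀ y, H y → G y y ≤ g y) :
    IsExcessive κ (paste H G g) := fun h b => by
  rcases hy : firstHit H h with _ | y
  · have hstep : ∀ q, _root_.paste H G g (q :: h) ≤ g (q :: h) := fun q => by
      by_cases hq : H (q :: h)
      · simpa [_root_.paste, firstHit_cons, hy, hq] using hle _ hq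
      · simp [_root_.paste, firstHit_cons, hy, hq]
    simpa [_root_.paste, hy] using (expect_mono hstep).trans (hg h b)
  · simpa [_root_.paste, firstHit_cons, hy] using hG y (firstHit_spec hy) h b

/-- Every play in `E` that extends `h` reaches a history at or after `h` at which `g` is at least
`1`. -/
def Covers (g : List Q → ℝ≥0∞) (h : List Q) (E : Set (ℕ → Q)) : Prop :=
  ∀ x ∈ E, x ∈ histCyl h → ∃ n, h.length ≤ n ∧ 1 ≤ g (res x n)

theorem covers_paste {H : List Q → Prop} {G : List Q → List Q → ℝ≥0∞} {h : List Q}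
    {E : Set (ℕ → Q)} (hH : ∀ y, H y → h.length ≤ y.length ∧ Covers (G y) y E)
    (hhit : ∀ x ∈ E, x ∈ histCyl h → ∃ n, H (res x n)) : Covers (paste H G g) h E := by
  intro x hxE hxh
  obtain ⟨n, hn⟩ := hhit x hxE hxh
  obtain ⟨y, hy⟩ := exists_firstHit hn
  obtain ⟨hlen, hcov⟩ := hH y (firstHit_spec hy)
  have hxy : res x y.length = y := res_length_eq_of_suffix (firstHit_suffix hy)
  obtain ⟨m, hm, hGm⟩ := hcov x hxE hxy
  have hy_suffix : y <:+ res x m := hxy ▸ res_suffix_res x hm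
  refine ⟨m, hlen.trans hm, ?_⟩
  simpa [paste, firstHit_eq_some_of_suffix hy_suffix (firstHit_self hy)] using hGm

end Excessive

section Capacity

variable {Q B : Type*} {κ : List Q → B → PMF Q} {E F : Set (ℕ → Q)} {h : List Q}
  {g : List Q → ℝ≥0∞}

/-- The one-player upper value of `E` after the history `h`: the least initial value of an
excessive function that covers `E`. -/
noncomputable def capacity (κ : List Q → B → PMF Q) (E : Set (ℕ → Q)) (h : List Q) : ℝ≥0∞ :=
  ⨅ (g : List Q → ℝ≥0∞) (_ : IsExcessive κ g) (_ : Covers g h E), g h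

theorem capacity_le (hg : IsExcessive κ g) (hcov : Covers g h E) : capacity κ E h ≤ g h :=
  iInf_le_of_le g (iInf₂_le hg hcov)

theorem exists_of_capacity_lt {c : ℝ≥0∞} (hc : capacity κ E h < c) :
    ∃ g, IsExcessive κ g ∧ Covers g h E ∧ g h < c := by
  simpa only [capacity, iInf_lt_iff, exists_prop] using hc

theorem capacity_le_one : capacity κ E h ≤ 1 :=
  capacity_le (isExcessive_const 1) fun _ _ _ => ⟨_, le_rfl, le_rfl⟩

theorem capacity_ne_top : capacity κ E h ≠ ⊤ :=
  (capacity_le_one.trans_lt ENNReal.one_lt_top).ne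

theorem capacity_mono (hEF : E ⊆ F) : capacity κ E h ≤ capacity κ F h :=
  le_iInf fun _ => le_iInf₂ fun hg hcov => capacity_le hg fun x hx => hcov x (hEF hx)

theorem capacity_eq_zero_of_disjoint (hE : Disjoint E (histCyl h)) : capacity κ E h = 0 :=
  nonpos_iff_eq_zero.1 <| capacity_le (isExcessive_const 0)
    fun _ hx hxh => absurd hxh (hE.notMem_of_mem_left hx)

theorem isExcessive_capacity (E : Set (ℕ → Q)) : IsExcessive κ (capacity κ E) := fun h b => by
  refine le_iInf fun g => le_iInf₂ fun hg hcov => ?_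
  by_cases hgh : 1 ≤ g h
  · calc expect (κ h b) (fun q => capacity κ E (q :: h)) ≤ expect (κ h b) fun _ => 1 :=
          expect_mono fun _ => capacity_le_one
      _ = 1 := expect_const _ 1
      _ ≤ g h := hgh
  · refine (expect_mono fun q => capacity_le hg fun x hxE hxq => ?_).trans (hg h b)
    have hxh : res x h.length = h := (mem_histCyl_cons.1 hxq).2
    obtain ⟨n, hn, hgn⟩ := hcov x hxE hxh
    refine ⟨n, hn.lt_of_ne ?_, hgn⟩
    rintro rfl
    exact hgh (hxh ▸ hgn)

theorem capacity_le_of_hit {H : List Q → Prop} (hg : IsExcessive κ g)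
    (hlt : ∀ y, H y → capacity κ E y < g y)
    (hhit : ∀ x ∈ E, x ∈ histCyl h → ∃ n, h.length ≤ n ∧ H (res x n)) :
    capacity κ E h ≤ g h := by
  have hcover : ∀ y, ∃ G, H y → IsExcessive κ G ∧ Covers G y E ∧ G y < g y := fun y => by
    by_cases hy : H y
    · exact (exists_of_capacity_lt (hlt y hy)).imp fun G hG _ => hG
    · exact ⟨0, fun hy' => absurd hy' hy⟩
  choose G hG using hcover
  let H' : List Q → Prop := fun y => h.length ≤ y.length ∧ H y
  have hexc : IsExcessive κ (paste H' G g) :=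
    hg.paste (fun y hy => (hG y hy.2).1) fun y hy => (hG y hy.2).2.2.le
  have hcov : Covers (paste H' G g) h E := by
    refine covers_paste (fun y hy => ⟨hy.1, (hG y hy.2).2.1⟩) fun x hxE hxh => ?_
    obtain ⟨n, hn, hH⟩ := hhit x hxE hxh
    exact ⟨n, by simpa using hn, hH⟩
  have hstart : paste H' G g h ≤ g h := by
    rcases hy : firstHit H' h with _ | y
    · simp [paste, hy]
    · have hyH := firstHit_spec hy
      obtain rfl : y = h := (firstHit_suffix hy).eq_of_length_le hyH.1
      simpa [paste, hy] using (hG y hyH.2).2.2.le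
  exact (capacity_le hexc hcov).trans hstart

-- If the capacity is positive at `h`, scaling a near-optimal excessive function down by a factor
-- between `θ` and `1` still dominates the capacity once it has reached `1`.
theorem capacity_eq_zero_of_le_of_lt_one {θ : ℝ≥0∞} (hθ : θ < 1)
    (hE : ∀ h, capacity κ E h ≤ θ) (h : List Q) : capacity κ E h = 0 := by
  by_contra hne
  obtain ⟨c, hθc, hc1⟩ := exists_between hθ
  have hc0 : c ≠ 0 := (zero_le.trans_lt hθc).ne'
  have hctop : c ≠ ⊤ := (hc1.trans ENNReal.one_lt_top).ne
  have hlt : capacity κ E h < capacity κ E h / c := by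
    rw [ENNReal.lt_div_iff_mul_lt (.inl hc0) (.inl hctop)]
    simpa using (ENNReal.mul_lt_mul_iff_right hne capacity_ne_top).2 hc1
  obtain ⟨g, hg, hcov, hgh⟩ := exists_of_capacity_lt hlt
  have hle : capacity κ E h ≤ c * g h := by
    refine capacity_le_of_hit (H := fun y => 1 ≤ g y) (hg.const_mul c) (fun y hy => ?_) hcov
    calc capacity κ E y ≤ θ := hE y
      _ < c := hθc
      _ = c * 1 := (mul_one c).symm
      _ ≤ c * g y := by gcongr
  rw [ENNReal.lt_div_iff_mul_lt (.inl hc0) (.inl hctop), mul_comm] at hgh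
  exact hle.not_gt hgh

theorem capacity_setOf_forall_lt_eq_zero {γ : List Q → ℝ≥0∞} {θ : ℝ≥0∞} (hθ : θ < 1)
    (hγ : ∀ h, capacity κ E h ≤ γ h) (h : List Q) :
    capacity κ {x ∈ E | ∀ m, γ (res x m) < θ} h = 0 := by
  refine capacity_eq_zero_of_le_of_lt_one hθ (fun h => ?_) h
  by_cases hh : γ h < θ
  · exact (capacity_mono (Set.sep_subset _ _)).trans ((hγ h).trans hh.le)
  · rw [capacity_eq_zero_of_disjoint]
    · exact zero_le
    · refine Set.disjoint_left.2 fun x hx hxh => hh ?_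
      simpa only [show res x h.length = h from hxh] using hx.2 h.length

theorem capacity_iUnion_le_tsum {ι : Type*} [Countable ι] (E : ι → Set (ℕ → Q)) :
    capacity κ (⋃ i, E i) h ≤ ∑' i, capacity κ (E i) h := by
  refine ENNReal.le_of_forall_pos_le_add fun η hη _ => ?_
  obtain ⟨ε, hε, hεη⟩ := ENNReal.exists_pos_sum_of_countable (ENNReal.coe_pos.2 hη).ne' ι
  have hlt : ∀ i, capacity κ (E i) h < capacity κ (E i) h + ε i := fun i =>
    ENNReal.lt_add_right capacity_ne_top (ENNReal.coe_pos.2 (hε i)).ne'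
  choose g hg hcov hgh using fun i => exists_of_capacity_lt (hlt i)
  have hcovers : Covers (fun h => ∑' i, g i h) h (⋃ i, E i) := fun x hx hxh => by
    obtain ⟨i, hi⟩ := Set.mem_iUnion.1 hx
    obtain ⟨n, hn, h1⟩ := hcov i x hi hxh
    exact ⟨n, hn, h1.trans (ENNReal.le_tsum i)⟩
  calc capacity κ (⋃ i, E i) h ≤ ∑' i, g i h := capacity_le (isExcessive_tsum hg) hcovers
    _ ≤ ∑' i, (capacity κ (E i) h + ε i) := ENNReal.tsum_le_tsum fun i => (hgh i).le
    _ = ∑' i, capacity κ (E i) h + ∑' i, (ε i : ℝ≥0∞) := ENNReal.tsum_add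
    _ ≤ ∑' i, capacity κ (E i) h + η := by gcongr

theorem capacity_union_le (E F : Set (ℕ → Q)) :
    capacity κ (E ∪ F) h ≤ capacity κ E h + capacity κ F h := by
  simpa [Set.union_eq_iUnion, add_comm] using
    capacity_iUnion_le_tsum (κ := κ) (h := h) fun b : Bool => cond b E F

theorem mul_capacity_setOf_exists_le (hg : IsExcessive κ g) {θ : ℝ≥0∞} (hθ0 : θ ≠ 0)
    (hθtop : θ ≠ ⊤) : θ * capacity κ {x | ∃ m, θ ≤ g (res x m)} [] ≤ g [] := by
  have hcov : Covers (fun h => θ⁻¹ * g h) [] {x | ∃ m, θ ≤ g (res x m)} := by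
    rintro x ⟨m, hm⟩ -
    refine ⟨m, zero_le, ?_⟩
    calc 1 = θ⁻¹ * θ := (ENNReal.inv_mul_cancel hθ0 hθtop).symm
      _ ≤ θ⁻¹ * g (res x m) := by gcongr
  calc θ * capacity κ {x | ∃ m, θ ≤ g (res x m)} []
      ≤ θ * (θ⁻¹ * g []) := by gcongr; exact capacity_le (hg.const_mul θ⁻¹) hcov
    _ = g [] := by rw [← mul_assoc, ENNReal.mul_inv_cancel hθ0 hθtop, one_mul]

-- Plays along which the limiting capacity `γ` stays below `θ < 1` are negligible, and the others
-- are controlled by the maximal inequality for the excessive function `γ`.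
theorem capacity_iUnion_le_iSup {E : ℕ → Set (ℕ → Q)} (hE : Monotone E) :
    capacity κ (⋃ n, E n) [] ≤ ⨆ n, capacity κ (E n) [] := by
  let γ : List Q → ℝ≥0∞ := fun h => ⨆ n, capacity κ (E n) h
  have hγ : IsExcessive κ γ := isExcessive_iSup_of_monotone
    (fun _ _ hnm _ => capacity_mono (hE hnm)) fun n => isExcessive_capacity (E n)
  refine ENNReal.le_of_forall_lt_one_mul_le fun θ hθ => ?_
  rcases eq_or_ne θ 0 with rfl | hθ0
  · simp
  let F : ℕ → Set (ℕ → Q) := fun n => {x ∈ E n | ∀ m, γ (res x m) < θ}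
  have hF : capacity κ (⋃ n, F n) [] = 0 := by
    refine nonpos_iff_eq_zero.1 ((capacity_iUnion_le_tsum F).trans_eq ?_)
    exact ENNReal.tsum_eq_zero.2 fun n => capacity_setOf_forall_lt_eq_zero hθ
      (fun h => le_iSup (fun n => capacity κ (E n) h) n) []
  have hcover : ⋃ n, E n ⊆ {x | ∃ m, θ ≤ γ (res x m)} ∪ ⋃ n, F n := fun x hx => by
    obtain ⟨n, hn⟩ := Set.mem_iUnion.1 hx
    by_cases hlow : ∀ m, γ (res x m) < θ
    · exact .inr (Set.mem_iUnion.2 ⟨n, hn, hlow⟩)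
    · exact .inl (by simpa using hlow)
  calc θ * capacity κ (⋃ n, E n) []
      ≤ θ * (capacity κ {x | ∃ m, θ ≤ γ (res x m)} [] + capacity κ (⋃ n, F n) []) := by
        gcongr
        exact (capacity_mono hcover).trans (capacity_union_le _ _)
    _ = θ * capacity κ {x | ∃ m, θ ≤ γ (res x m)} [] := by rw [hF, add_zero]
    _ ≤ γ [] := mul_capacity_setOf_exists_le hγ hθ0 (hθ.trans ENNReal.one_lt_top).ne

theorem capacity_le_iSup_expect (E : Set (ℕ → Q)) (h : List Q) :
    capacity κ E h ≤ ⨆ b, expect (κ h b) fun q => capacity κ E (q :: h) := by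
  set S := ⨆ b, expect (κ h b) fun q => capacity κ E (q :: h) with hS
  refine ENNReal.le_of_forall_pos_le_add fun η hη _ => ?_
  let g : List Q → ℝ≥0∞ := fun x =>
    if x = h then S + η else if h <:+ x then capacity κ E x + η else ⊤
  have hg_self : g h = S + η := if_pos rfl
  have hg_ext : ∀ x q, h <:+ x → g (q :: x) = capacity κ E (q :: x) + η := fun x q hx => by
    have hne : q :: x ≠ h := fun hq => by simpa [← hq] using hx.length_le
    simp [g, hne, hx.trans (List.suffix_cons q x)]
  have hg : IsExcessive κ g := fun x b => by
    by_cases hx : h <:+ x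
    · simp only [hg_ext x _ hx, expect_add, expect_const]
      by_cases hxh : x = h
      · subst hxh
        rw [hg_self]
        gcongr
        exact le_iSup (fun b => expect (κ x b) fun q => capacity κ E (q :: x)) b
      · simp only [g, hxh, hx, if_true, if_false]
        gcongr
        exact isExcessive_capacity E x b
    · have hxh : x ≠ h := fun hxh => hx (hxh ▸ List.suffix_rfl)
      simp [g, hx, hxh]
  rw [← hg_self]
  refine capacity_le_of_hit (H := fun y => ∃ q, y = q :: h) hg ?_ fun x _ hxh =>
    ⟨h.length + 1, Nat.le_succ _, x h.length, by rw [res_succ, show res x h.length = h from hxh]⟩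
  rintro _ ⟨q, rfl⟩
  rw [hg_ext h q List.suffix_rfl]
  exact ENNReal.lt_add_right capacity_ne_top (ENNReal.coe_pos.2 hη).ne'

end Capacity

section Choquet

theorem exists_forall_cylinder_subset {E : ℕ → Type*} [∀ n, TopologicalSpace (E n)]
    [∀ n, DiscreteTopology (E n)] {C V : Set (∀ n, E n)} (hC : IsCompact C) (hV : IsOpen V)
    (hCV : C ⊆ V) : ∃ n, ∀ x ∈ C, cylinder x n ⊆ V := by
  let U : ℕ → Set (∀ n, E n) := fun n => {x | cylinder x n ⊆ V}
  have hU : ∀ n, IsOpen (U n) := fun n => isOpen_iff_mem_nhds.2 fun x hx => by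
    filter_upwards [(isOpen_cylinder E x n).mem_nhds (self_mem_cylinder x n)] with y hy
    rwa [Set.mem_ofPred_eq, mem_cylinder_iff_eq.1 hy]
  have hmono : Monotone U := fun n m hnm x hx => (cylinder_anti x hnm).trans hx
  have hcover : C ⊆ ⋃ n, U n := fun x hx => by
    obtain ⟨_, ⟨y, n, rfl⟩, hxy, hyV⟩ :=
      (isTopologicalBasis_cylinders E).mem_nhds_iff.1 (hV.mem_nhds (hCV hx))
    refine Set.mem_iUnion.2 ⟨n, ?_⟩
    rwa [Set.mem_ofPred_eq, mem_cylinder_iff_eq.1 hxy]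
  exact hC.elim_directed_cover U hU hcover hmono.directed_le

variable {X α : Type*} [CompleteLinearOrder α] {c : Set X → α} {r : α}

theorem exists_forall_lt_image_setOf_le
    (hc : ∀ E : ℕ → Set X, Monotone E → c (⋃ n, E n) ≤ ⨆ n, c (E n))
    {f : (ℕ → ℕ) → X} (hr : r < c (Set.range f)) :
    ∃ m : ℕ → ℕ, ∀ n, r < c (f '' {x | ∀ i < n, x i ≤ m i}) := by
  have hstep (n : ℕ) (S : Set (ℕ → ℕ)) :
      ∃ k, r < c (f '' S) → r < c (f '' (S ∩ {x | x n ≤ k})) := by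
    by_cases hS : r < c (f '' S)
    · have hunion : f '' S = ⋃ k, f '' (S ∩ {x | x n ≤ k}) := by
        rw [← Set.image_iUnion, ← Set.inter_iUnion,
          Set.iUnion_eq_univ_iff.2 fun x => ⟨x n, le_refl (x n)⟩, Set.inter_univ]
      have hmono : Monotone fun k => f '' (S ∩ {x | x n ≤ k}) := fun k l hkl =>
        Set.image_mono (Set.inter_subset_inter_right S fun x hx => le_trans hx hkl)
      rw [hunion] at hS
      exact (lt_iSup_iff.1 (hS.trans_le (hc _ hmono))).imp fun k hk _ => hk
    · exact ⟨0, fun h => absurd h hS⟩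
  choose k hk using hstep
  let S : ℕ → Set (ℕ → ℕ) := fun n => n.rec Set.univ fun i T => T ∩ {x | x i ≤ k i T}
  have hS : ∀ n, S n = {x | ∀ i < n, x i ≤ k i (S i)} := fun n => by
    induction n with
    | zero => simp [S]
    | succ n ih =>
      ext x
      exact (and_congr_left' (Set.ext_iff.1 ih x)).trans Nat.forall_lt_succ_right.symm
  refine ⟨fun i => k i (S i), fun n => ?_⟩
  rw [← hS]
  induction n with
  | zero => simpa [S] using hr
  | succ n ih => exact hk n (S n) ih

-- Bounding the coordinates of a parametrization `f` of `E` one at a time keeps the capacity above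
-- `r`; a neighbourhood of the image of the resulting compact box contains one of these images.
theorem exists_isCompact_forall_isOpen_lt [TopologicalSpace X] (hmono : Monotone c)
    (hc : ∀ E : ℕ → Set X, Monotone E → c (⋃ n, E n) ≤ ⨆ n, c (E n)) {E : Set X}
    (hE : AnalyticSet E) (hr : r < c E) :
    ∃ C ⊆ E, IsCompact C ∧ ∀ O, IsOpen O → C ⊆ O → r < c O := by
  rw [AnalyticSet] at hE
  obtain rfl | ⟨f, hf, rfl⟩ := hE
  · exact ⟨∅, subset_rfl, isCompact_empty, fun O _ hO => hr.trans_le (hmono hO)⟩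
  obtain ⟨m, hm⟩ := exists_forall_lt_image_setOf_le hc hr
  have hbox : IsCompact (Set.pi Set.univ fun i => Set.Iic (m i)) :=
    isCompact_univ_pi fun i => (Set.finite_Iic (m i)).isCompact
  refine ⟨f '' Set.pi Set.univ fun i => Set.Iic (m i), Set.image_subset_range _ _, hbox.image hf,
    fun O hO hCO => ?_⟩
  obtain ⟨n, hn⟩ :=
    exists_forall_cylinder_subset hbox (hO.preimage hf) (Set.image_subset_iff.1 hCO)
  refine (hm n).trans_le (hmono (Set.image_subset_iff.2 fun x hx => ?_))
  refine hn (fun i => min (x i) (m i)) (fun i _ => min_le_right (x i) (m i)) ?_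
  exact mem_cylinder_iff.2 fun i hi => (min_eq_left (hx i hi)).symm

theorem le_capacity_of_forall_isOpen {Q B : Type*} [TopologicalSpace Q] [DiscreteTopology Q]
    {κ : List Q → B → PMF Q} {C : Set (ℕ → Q)} {h : List Q} {r : ℝ≥0∞}
    (hr : ∀ O, IsOpen O → C ⊆ O → r ≤ capacity κ O h) : r ≤ capacity κ C h := by
  refine le_iInf fun g => le_iInf₂ fun hg hcov => ?_
  let O : Set (ℕ → Q) := {x | x ∈ histCyl h → ∃ n, h.length ≤ n ∧ 1 ≤ g (res x n)}
  have hO : O = (histCyl h)ᶜ ∪ ⋃ n, {x | h.length ≤ n ∧ 1 ≤ g (res x n)} := by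
    ext x
    simp [O, imp_iff_not_or]
  have hOopen : IsOpen O := hO ▸ (isOpen_setOf_res (fun w => ¬w = h) _).union
    (isOpen_iUnion fun n => isOpen_setOf_res (fun w => h.length ≤ n ∧ 1 ≤ g w) n)
  exact (hr O hOopen hcov).trans (capacity_le hg fun x hx => hx)

end Choquet

section TrajectoryMeasure

variable {Q : Type u}

attribute [local instance] BorelSeq

/-- `μ` is the law of a process started at the empty history and whose next state after the history
`h` is drawn from `κ h`. -/
structure IsTrajectoryMeasure (κ : List Q → PMF Q) (μ : Measure (ℕ → Q)) : Prop where
  measure_univ : μ Set.univ = 1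
  measure_histCyl_cons : ∀ h q, μ (histCyl (q :: h)) = μ (histCyl h) * κ h q

theorem setLIntegral_histCyl {μ : Measure (ℕ → Q)} (φ : List Q → ℝ≥0∞) (h : List Q) :
    ∫⁻ x in histCyl h, φ (res x h.length) ∂μ = φ h * μ (histCyl h) := by
  rw [← setLIntegral_const]
  exact setLIntegral_congr_fun (measurableSet_histCyl h) fun x hx => congrArg φ hx

variable {κ : List Q → PMF Q} {μ : Measure (ℕ → Q)} {φ : List Q → ℝ≥0∞}

theorem IsTrajectoryMeasure.lintegral_res_zero (hμ : IsTrajectoryMeasure κ μ)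
    (φ : List Q → ℝ≥0∞) : ∫⁻ x, φ (res x 0) ∂μ = φ [] := by
  simp [hμ.measure_univ]

variable [Countable Q]

namespace IsTrajectoryMeasure

theorem setLIntegral_histCyl_succ (hμ : IsTrajectoryMeasure κ μ) (h : List Q) :
    ∫⁻ x in histCyl h, φ (res x (h.length + 1)) ∂μ =
      expect (κ h) (fun q => φ (q :: h)) * μ (histCyl h) := by
  have hdisj : Pairwise (Function.onFun Disjoint fun q => histCyl (q :: h)) := fun p q hpq =>
    Set.disjoint_left.2 fun x hp hq =>
      hpq ((mem_histCyl_cons.1 hp).1.symm.trans (mem_histCyl_cons.1 hq).1)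
  calc ∫⁻ x in histCyl h, φ (res x (h.length + 1)) ∂μ
      = ∑' q, ∫⁻ x in histCyl (q :: h), φ (res x (q :: h).length) ∂μ := by
        rw [histCyl_eq_iUnion, lintegral_iUnion (fun q => measurableSet_histCyl _) hdisj]
        rfl
    _ = ∑' q, κ h q * φ (q :: h) * μ (histCyl h) := by
        simp only [setLIntegral_histCyl, hμ.measure_histCyl_cons]
        exact tsum_congr fun q => by ring
    _ = expect (κ h) (fun q => φ (q :: h)) * μ (histCyl h) := ENNReal.tsum_mul_right

theorem lintegral_res_succ (hμ : IsTrajectoryMeasure κ μ) (φ : List Q → ℝ≥0∞) (n : ℕ) :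
    ∫⁻ x, φ (res x (n + 1)) ∂μ =
      ∫⁻ x, expect (κ (res x n)) (fun q => φ (q :: res x n)) ∂μ := by
  have hcover : Set.univ = ⋃ h : {h : List Q // h.length = n}, histCyl h.1 :=
    (Set.iUnion_eq_univ_iff.2 fun x => ⟨⟨res x n, res_length x n⟩, res_mem_histCyl x n⟩).symm
  have hdisj : Pairwise (Function.onFun Disjoint
      fun h : {h : List Q // h.length = n} => histCyl h.1) := fun h k hhk =>
    Set.disjoint_left.2 fun x (hxh : res x h.1.length = h.1) (hxk : res x k.1.length = k.1) =>
      hhk (Subtype.ext (by rw [← hxh, ← hxk, h.2, k.2]))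
  rw [← setLIntegral_univ, hcover, lintegral_iUnion (fun h => measurableSet_histCyl _) hdisj,
    ← setLIntegral_univ (f := fun x => expect _ _), hcover,
    lintegral_iUnion (fun h => measurableSet_histCyl _) hdisj]
  refine tsum_congr ?_
  rintro ⟨h, rfl⟩
  rw [hμ.setLIntegral_histCyl_succ]
  exact (setLIntegral_histCyl (fun h => expect (κ h) fun q => φ (q :: h)) h).symm

theorem lintegral_res_le (hμ : IsTrajectoryMeasure κ μ)
    (hφ : ∀ h, expect (κ h) (fun q => φ (q :: h)) ≤ φ h) (n : ℕ) :
    ∫⁻ x, φ (res x n) ∂μ ≤ φ [] := by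
  induction n with
  | zero => exact (hμ.lintegral_res_zero φ).le
  | succ n ih =>
    rw [hμ.lintegral_res_succ]
    exact (lintegral_mono fun x => hφ (res x n)).trans ih

theorem le_lintegral_res (hμ : IsTrajectoryMeasure κ μ)
    (hφ : ∀ h, φ h ≤ expect (κ h) fun q => φ (q :: h)) (n : ℕ) :
    φ [] ≤ ∫⁻ x, φ (res x n) ∂μ := by
  induction n with
  | zero => exact (hμ.lintegral_res_zero φ).ge
  | succ n ih =>
    rw [hμ.lintegral_res_succ]
    exact ih.trans (lintegral_mono fun x => hφ (res x n))

theorem measure_eq_zero_of_tendsto_top (hμ : IsTrajectoryMeasure κ μ)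
    (hφ : ∀ h, expect (κ h) (fun q => φ (q :: h)) ≤ φ h) (hfin : φ [] ≠ ⊤) {S : Set (ℕ → Q)}
    (hS : ∀ x ∈ S, Tendsto (fun n => φ (res x n)) atTop (𝓝 ⊤)) : μ S = 0 := by
  have hmeas : ∀ n, Measurable fun x : ℕ → Q => φ (res x n) := measurable_comp_res φ
  have hfatou : ∫⁻ x, liminf (fun n => φ (res x n)) atTop ∂μ ≤ φ [] :=
    (lintegral_liminf_le hmeas).trans
      (liminf_le_of_le (h := fun b hb =>
        let ⟨n, hn⟩ := hb.exists; hn.trans (hμ.lintegral_res_le hφ n)))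
  have hlt : ∀ᵐ x ∂μ, liminf (fun n => φ (res x n)) atTop < ⊤ :=
    ae_lt_top (Measurable.liminf hmeas) (hfatou.trans_lt hfin.lt_top).ne
  exact measure_mono_null (fun x hx => by simp [(hS x hx).liminf_eq]) hlt

end IsTrajectoryMeasure

theorem capacity_le_measure_of_isClosed {B : Type*} {κ : List Q → B → PMF Q} {t : List Q → B}
    [TopologicalSpace Q] [DiscreteTopology Q] {C : Set (ℕ → Q)} (hC : IsClosed C)
    (ht : ∀ h, capacity κ C h ≤ expect (κ h (t h)) fun q => capacity κ C (q :: h))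
    (hμ : IsTrajectoryMeasure (fun h => κ h (t h)) μ) : capacity κ C [] ≤ μ C := by
  let T : List Q → Prop := fun h => (C ∩ histCyl h).Nonempty
  have hcap : ∀ h, capacity κ C h ≤ {h | T h}.indicator 1 h := fun h => by
    by_cases hh : T h
    · simpa [hh] using capacity_le_one
    · rw [capacity_eq_zero_of_disjoint (Set.disjoint_iff_inter_eq_empty.2
        (Set.not_nonempty_iff_eq_empty.1 hh))]
      exact zero_le
  have hanti : Antitone fun n => {x : ℕ → Q | T (res x n)} := antitone_nat_of_succ_le fun n x hx =>
    hx.mono fun y hy => ⟨hy.1, (mem_histCyl_cons.1 hy.2).2⟩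
  have hinter : ⋂ n, {x : ℕ → Q | T (res x n)} ⊆ C := fun x hx => by
    refine hC.closure_subset (mem_closure_iff_nhds.2 fun V hV => ?_)
    obtain ⟨_, ⟨y, n, rfl⟩, hxy, hyV⟩ :=
      (isTopologicalBasis_cylinders fun _ : ℕ => Q).mem_nhds_iff.1 hV
    obtain ⟨z, hzC, hzx⟩ := Set.mem_iInter.1 hx n
    refine ⟨z, hyV ?_, hzC⟩
    rw [← mem_cylinder_iff_eq.1 hxy, cylinder_eq_res]
    simpa [histCyl] using hzx
  have hle : ∀ n, capacity κ C [] ≤ μ {x | T (res x n)} := fun n => calc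
    capacity κ C [] ≤ ∫⁻ x, capacity κ C (res x n) ∂μ := hμ.le_lintegral_res ht n
    _ ≤ ∫⁻ x, {x | T (res x n)}.indicator 1 x ∂μ := lintegral_mono fun x => hcap (res x n)
    _ = μ {x | T (res x n)} := lintegral_indicator_one (measurableSet_setOf_res T n)
  refine le_trans ?_ (measure_mono hinter)
  rw [hanti.measure_iInter (fun n => (measurableSet_setOf_res T n).nullMeasurableSet)
    ⟨0, ((measure_mono (Set.subset_univ _)).trans_lt (hμ.measure_univ ▸ ENNReal.one_lt_top)).ne⟩]
  exact le_iInf hle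

theorem capacity_le_of_forall_measure_le {B : Type*} [Finite B] [Nonempty B]
    {κ : List Q → B → PMF Q} {E : Set (ℕ → Q)} (hE : MeasurableSet E) {ε : ℝ≥0∞}
    (hε : ∀ t : List Q → B, ∃ μ, IsTrajectoryMeasure (fun h => κ h (t h)) μ ∧ μ E ≤ ε) :
    capacity κ E [] ≤ ε := by
  let _ : TopologicalSpace Q := ⊥
  have : DiscreteTopology Q := ⟨rfl⟩
  by_contra! hlt
  obtain ⟨r, hεr, hr⟩ := exists_between hlt
  obtain ⟨C, hCE, hC, hO⟩ := exists_isCompact_forall_isOpen_lt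
    (fun _ _ h => capacity_mono h) (fun _ => capacity_iUnion_le_iSup)
    (analyticSet_of_measurableSet_borelSeq hE) hr
  have hrC : r ≤ capacity κ C [] :=
    le_capacity_of_forall_isOpen fun O hOpen hCO => (hO O hOpen hCO).le
  choose t ht using fun h : List Q =>
    exists_eq_ciSup_of_finite (f := fun b => expect (κ h b) fun q => capacity κ C (q :: h))
  obtain ⟨μ, hμ, hμE⟩ := hε t
  have hCμ : capacity κ C [] ≤ μ C := capacity_le_measure_of_isClosed hC.isClosed
    (fun h => (capacity_le_iSup_expect C h).trans_eq (ht h).symm) hμ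
  exact hεr.not_ge ((hrC.trans hCμ).trans ((measure_mono hCE).trans hμE))

end TrajectoryMeasure

section Colors

variable {Q K : Type u} (col : Q → Q → K)

/-- The color history of a state history. Both are stored with the most recent entry first. -/
def revColors : List Q → List K
  | q :: p :: r => col p q :: revColors (p :: r)
  | _ => []

theorem length_revColors_cons (q : Q) (r : List Q) :
    (revColors col (q :: r)).length = r.length := by
  induction r generalizing q with
  | nil => rfl
  | cons p r ih => simp [revColors, ih]

theorem revColors_res (x : ℕ → Q) (n : ℕ) :
    revColors col (res x (n + 1)) = res (colorSeq col x) n := by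
  induction n with
  | zero => rfl
  | succ n ih => rw [res_succ (colorSeq col x), ← ih]; rfl

theorem colHist_append_singleton (l : List Q) (p q : Q) :
    colHist col (l ++ [p]) q = colHist col l p ++ [col p q] := by
  induction l with
  | nil => rfl
  | cons a l ih => cases l <;> simp_all [colHist]

theorem colHist_reverse (q : Q) (r : List Q) :
    colHist col r.reverse q = (revColors col (q :: r)).reverse := by
  induction r generalizing q with
  | nil => rfl
  | cons p r ih =>
    rw [List.reverse_cons, colHist_append_singleton, ih, revColors, List.reverse_cons]

theorem finite_setOf_revColors_eq [Finite Q] (w : List K) (q : Q) :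
    {r : List Q | revColors col (q :: r) = w}.Finite := by
  refine (List.finite_length_eq Q w.length).subset fun r hr => ?_
  rw [Set.mem_ofPred_eq, ← length_revColors_cons col q r]
  exact congrArg List.length hr

theorem eventually_forall_revColors_eq_res [Finite Q] [Nonempty Q] {ρ : ℕ → K} {T : List Q → Prop}
    (hT : ∀ q h, T h → T (q :: h)) (hρ : ∀ x, colorSeq col x = ρ → ∃ n, T (res x n)) :
    ∀ᶠ n in atTop, ∀ q r, revColors col (q :: r) = res ρ n → T (q :: r) := by
  let _ : TopologicalSpace Q := ⊥
  have : DiscreteTopology Q := ⟨rfl⟩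
  let C : ℕ → Set (ℕ → Q) := fun n =>
    {x | revColors col (res x (n + 1)) = res ρ n ∧ ¬T (res x (n + 1))}
  have hclosed : ∀ n, IsClosed (C n) := fun n =>
    isClosed_setOf_res (fun h => revColors col h = res ρ n ∧ ¬T h) (n + 1)
  have hanti : Antitone C := antitone_nat_of_succ_le fun n x ⟨hx, hxT⟩ => by
    rw [revColors_res, res_succ, res_succ, List.cons.injEq] at hx
    exact ⟨(revColors_res col x n).trans hx.2, fun h => hxT (hT _ _ h)⟩
  by_contra hfreq
  have hne : ∀ n, (C n).Nonempty := fun n => by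
    obtain ⟨m, hm, hbad⟩ := frequently_atTop.1 (not_eventually.1 hfreq) n
    push Not at hbad
    obtain ⟨q, r, hr, hrT⟩ := hbad
    obtain ⟨x, hx⟩ := exists_res_eq (q :: r)
    have hlen : r.length = m := by rw [← length_revColors_cons col q r, hr, res_length]
    rw [List.length_cons, hlen] at hx
    exact ⟨x, hanti hm ⟨hx ▸ hr, hx ▸ hrT⟩⟩
  obtain ⟨x, hx⟩ := IsCompact.nonempty_iInter_of_sequence_nonempty_isCompact_isClosed C
    (fun n => hanti n.le_succ) hne (hclosed 0).isCompact hclosed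
  rw [Set.mem_iInter] at hx
  obtain ⟨n, hn⟩ := hρ x (res_injective (funext fun n => revColors_res col x n ▸ (hx n).1))
  exact (hx n).2 (hT _ _ hn)

attribute [local instance] BorelSeq

theorem measurableSet_UW [Countable Q] {W : Set (ℕ → K)} (hW : MeasurableSet W) :
    MeasurableSet (UW col W) := by
  have hcol : Measurable (colorSeq col) := by
    refine measurable_generateFrom ?_
    rintro _ ⟨w, rfl⟩
    have hpre : colorSeq col ⁻¹' Cyl w =
        {x | revColors col (res x (w.reverse.length + 1)) = w.reverse} := by
      ext x
      rw [Set.mem_ofPred_eq, revColors_res, Cyl_eq_histCyl]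
      rfl
    rw [hpre]
    exact measurableSet_setOf_res (fun h => revColors col h = w.reverse) _
  exact hcol hW

end Colors

section Absorb

variable {Q B : Type*} {κ : List Q → B → PMF Q} {g : List Q → ℝ≥0∞} {h y : List Q}

/-- The function `g` stopped with value `1` as soon as it reaches at least `1`. -/
noncomputable def absorb (g : List Q → ℝ≥0∞) : List Q → ℝ≥0∞ :=
  paste (fun y => 1 ≤ g y) (fun _ _ => 1) g

theorem IsExcessive.absorb (hg : IsExcessive κ g) : IsExcessive κ (absorb g) :=
  hg.paste (fun _ _ => isExcessive_const 1) fun _ hy => hy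

theorem absorb_eq_one_of_suffix (hyh : y <:+ h) (hy : 1 ≤ g y) : absorb g h = 1 := by
  obtain ⟨z, hz⟩ := exists_firstHit (H := fun y => 1 ≤ g y) hy
  simp [absorb, paste, firstHit_eq_some_of_suffix hyh hz]

theorem absorb_nil_le : absorb g [] ≤ g [] := by
  by_cases hg : 1 ≤ g [] <;> simp [absorb, paste, firstHit, hg]

end Absorb

section LossPotential

variable {A B Q K : Type u} {Δ : Q → A → B → PMF Q} {col : Q → Q → K} {W : Set (ℕ → K)}
  {G : List K → Q → ℝ≥0∞}

/-- A function of the color history (most recent color first) and of the current state that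
Player A can keep from increasing in expectation, and that is eventually at least `1` along every
losing color sequence. It bounds from above the probability that Player A loses. -/
structure IsLossPotential (Δ : Q → A → B → PMF Q) (col : Q → Q → K) (W : Set (ℕ → K))
    (G : List K → Q → ℝ≥0∞) : Prop where
  exists_action : ∀ w q, ∃ a, ∀ b, expect (Δ q a b) (fun q' => G (col q q' :: w) q') ≤ G w q
  eventually_one_le : ∀ ρ ∉ W, ∀ᶠ n in atTop, ∀ q, 1 ≤ G (res ρ n) q

theorem isLossPotential_one [Nonempty A] : IsLossPotential Δ col W fun _ _ => 1 where
  exists_action _ _ := ⟨Classical.arbitrary A, fun _ => (expect_const _ 1).le⟩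
  eventually_one_le _ _ := .of_forall fun _ _ => le_rfl

theorem IsLossPotential.shift (hG : IsLossPotential Δ col W G) (htail : TailObj W) (w : List K) :
    IsLossPotential Δ col W fun u q => G (u ++ w) q where
  exists_action u q := hG.exists_action (u ++ w) q
  eventually_one_le ρ hρ := by
    have hev := hG.eventually_one_le _ (mt (htail ρ w.reverse).2 hρ)
    filter_upwards [(tendsto_add_atTop_nat w.length).eventually hev] with n hn
    rwa [add_comm, res_prependWord] at hn

theorem isLossPotential_iInf {ι : Type*} [Finite ι] [Nonempty ι] {G : ι → List K → Q → ℝ≥0∞}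
    (hG : ∀ i, IsLossPotential Δ col W (G i)) :
    IsLossPotential Δ col W fun w q => ⨅ i, G i w q where
  exists_action w q := by
    obtain ⟨i, hi⟩ := exists_eq_ciInf_of_finite (f := fun i => G i w q)
    obtain ⟨a, ha⟩ := (hG i).exists_action w q
    exact ⟨a, fun b => (expect_mono fun q' => iInf_le _ i).trans ((ha b).trans_eq hi)⟩
  eventually_one_le ρ hρ := by
    filter_upwards [eventually_all.2 fun i => (hG i).eventually_one_le ρ hρ] with n hn q
    exact le_iInf fun i => hn i q

/-- The least value of `g` over the state histories that end in the state `q` and have the color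
history `w`. -/
noncomputable def colorInf (col : Q → Q → K) (g : List Q → ℝ≥0∞) (w : List K) (q : Q) : ℝ≥0∞ :=
  ⨅ (r : List Q) (_ : revColors col (q :: r) = w), g (q :: r)

theorem colorInf_le (g : List Q → ℝ≥0∞) (q : Q) (r : List Q) :
    colorInf col g (revColors col (q :: r)) q ≤ g (q :: r) :=
  iInf_le_of_le r (iInf_le _ rfl)

/-- The one-player kernel that Player A's deterministic strategy `s` leaves to Player B. Its first
step, from the empty history, moves to the initial state `q0`. -/
noncomputable def responseKernel (Δ : Q → A → B → PMF Q) (q0 : Q) (s : List Q → Q → A) :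
    List Q → B → PMF Q
  | [], _ => PMF.pure q0
  | q :: r, b => Δ q (s r.reverse q) b

variable {q0 : Q} {s : List Q → Q → A} {g : List Q → ℝ≥0∞}

theorem exists_action_colorInf [Finite Q] [Nonempty A] (hg : IsExcessive (responseKernel Δ q0 s) g)
    (w : List K) (q : Q) :
    ∃ a, ∀ b,
      expect (Δ q a b) (fun q' => colorInf col g (col q q' :: w) q') ≤ colorInf col g w q := by
  rcases {r : List Q | revColors col (q :: r) = w}.eq_empty_or_nonempty with hempty | hne
  · have hne : ∀ r : List Q, revColors col (q :: r) ≠ w := Set.eq_empty_iff_forall_notMem.1 hempty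
    exact ⟨Classical.arbitrary A, fun b => by simp [colorInf, hne]⟩
  obtain ⟨r, hr, hmin⟩ := Set.exists_min_image _ (fun r => g (q :: r))
    (finite_setOf_revColors_eq col w q) hne
  obtain rfl : revColors col (q :: r) = w := hr
  refine ⟨s r.reverse q, fun b => ?_⟩
  calc expect (Δ q (s r.reverse q) b)
        (fun q' => colorInf col g (col q q' :: revColors col (q :: r)) q')
      ≤ expect (Δ q (s r.reverse q) b) fun q' => g (q' :: q :: r) :=
        expect_mono fun q' => colorInf_le g q' (q :: r)
    _ ≤ g (q :: r) := hg (q :: r) b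
    _ ≤ colorInf col g (revColors col (q :: r)) q := le_iInf₂ hmin

theorem eventually_one_le_colorInf_absorb [Finite Q] [Nonempty Q] {ρ : ℕ → K} (hρ : ρ ∉ W)
    (hcov : Covers g [] (UW col W)ᶜ) :
    ∀ᶠ n in atTop, ∀ q, 1 ≤ colorInf col (absorb g) (res ρ n) q := by
  have hhit : ∀ x, colorSeq col x = ρ → ∃ n, ∃ y, y <:+ res x n ∧ 1 ≤ g y := by
    rintro x rfl
    obtain ⟨n, -, hn⟩ := hcov x hρ (histCyl_nil ▸ Set.mem_univ x)
    exact ⟨n, res x n, List.suffix_rfl, hn⟩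
  have hupward : ∀ q h, (∃ y, y <:+ h ∧ 1 ≤ g y) → ∃ y, y <:+ q :: h ∧ 1 ≤ g y :=
    fun q h ⟨y, hyh, hy⟩ => ⟨y, hyh.trans (List.suffix_cons q h), hy⟩
  filter_upwards [eventually_forall_revColors_eq_res col hupward hhit] with n hn q
  refine le_iInf₂ fun r hr => ?_
  obtain ⟨y, hyr, hy⟩ := hn q r hr
  exact (absorb_eq_one_of_suffix hyr hy).ge

-- Forgetting the state history and keeping only its colors is harmless: Player A may pretend that
-- the state history is the best one with the observed colors.
theorem exists_isLossPotential_lt [Finite Q] [Nonempty A] [Nonempty B] {c : ℝ≥0∞}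
    (hc : capacity (responseKernel Δ q0 s) (UW col W)ᶜ [] < c) :
    ∃ G, IsLossPotential Δ col W G ∧ G [] q0 < c := by
  have : Nonempty Q := ⟨q0⟩
  obtain ⟨g, hg, hcov, hgc⟩ := exists_of_capacity_lt hc
  refine ⟨colorInf col (absorb g), ⟨exists_action_colorInf hg.absorb, fun ρ hρ =>
    eventually_one_le_colorInf_absorb hρ hcov⟩, ?_⟩
  calc colorInf col (absorb g) [] q0 ≤ absorb g [q0] := colorInf_le (absorb g) q0 []
    _ = expect (responseKernel Δ q0 s [] (Classical.arbitrary B)) (fun q => absorb g [q]) :=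
        (expect_pure q0 fun q => absorb g [q]).symm
    _ ≤ absorb g [] := hg.absorb [] _
    _ ≤ g [] := absorb_nil_le
    _ < c := hgc

end LossPotential

section LossValue

variable {A B Q K : Type u} {Δ : Q → A → B → PMF Q} {col : Q → Q → K} {W : Set (ℕ → K)}

/-- The infimum of the initial values at `q` of the loss potentials, an upper bound on the
probability of losing that Player A can guarantee from `q`. -/
noncomputable def lossValue (Δ : Q → A → B → PMF Q) (col : Q → Q → K) (W : Set (ℕ → K)) (q : Q) :
    ℝ≥0∞ :=
  ⨅ (G : List K → Q → ℝ≥0∞) (_ : IsLossPotential Δ col W G), G [] q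

theorem IsLossPotential.lossValue_le {G : List K → Q → ℝ≥0∞} (hG : IsLossPotential Δ col W G)
    (htail : TailObj W) (w : List K) (q : Q) : lossValue Δ col W q ≤ G w q :=
  iInf₂_le _ (hG.shift htail w)

theorem exists_isLossPotential_forall_lt [Finite Q] [Nonempty Q] [Nonempty A] {ε : ℝ≥0∞}
    (hε : 0 < ε) :
    ∃ G, IsLossPotential Δ col W G ∧ ∀ q, lossValue Δ col W q = 0 → G [] q < ε := by
  have hpointwise : ∀ q, ∃ G, IsLossPotential Δ col W G ∧ (lossValue Δ col W q = 0 → G [] q < ε) :=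
    fun q => by
      by_cases hq : lossValue Δ col W q = 0
      · obtain ⟨G, hG, hlt⟩ : ∃ G, IsLossPotential Δ col W G ∧ G [] q < ε := by
          simpa only [lossValue, iInf_lt_iff, exists_prop] using hq.trans_lt hε
        exact ⟨G, hG, fun _ => hlt⟩
      · exact ⟨_, isLossPotential_one, fun h => absurd h hq⟩
  choose G hG hlt using hpointwise
  exact ⟨_, isLossPotential_iInf hG, fun q hq => (iInf_le _ q).trans_lt (hlt q hq)⟩

theorem eventually_forall_eq_zero_of_lt {ι : Type*} [Finite ι] (f : ι → ℝ≥0∞) :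
    ∀ᶠ c in 𝓝 0, ∀ i, f i < c → f i = 0 := by
  refine eventually_all.2 fun i => ?_
  rcases eq_or_ne (f i) 0 with hi | hi
  · exact .of_forall fun _ _ => hi
  · filter_upwards [gt_mem_nhds (pos_iff_ne_zero.2 hi)] with c hc hfc
    exact absurd hfc hc.le.not_gt

theorem eventually_lossValue_eq_zero_of_lt [Finite A] [Finite B] [Finite Q] (htail : TailObj W) :
    ∀ᶠ c in 𝓝 0, ∀ G, IsLossPotential Δ col W G → ∀ w q a b,
      expect (Δ q a b) (fun q' => G (col q q' :: w) q') < c →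
        ∀ q' ∈ (Δ q a b).support, lossValue Δ col W q' = 0 := by
  filter_upwards [eventually_forall_eq_zero_of_lt fun i : Q × A × B × Q =>
    Δ i.1 i.2.1 i.2.2.1 i.2.2.2 * lossValue Δ col W i.2.2.2] with c hc G hG w q a b hlt q' hq'
  refine (mul_eq_zero.1 (hc (q, a, b, q') (lt_of_le_of_lt ?_ hlt))).resolve_left
    ((PMF.mem_support_iff _ _).1 hq')
  calc Δ q a b q' * lossValue Δ col W q'
      ≤ Δ q a b q' * G (col q q' :: w) q' := by gcongr; exact hG.lossValue_le htail _ q'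
    _ ≤ expect (Δ q a b) (fun q' => G (col q q' :: w) q') := ENNReal.le_tsum q'

/-- A loss potential rescaled so that it starts below `1` on the states of `Z`, is eventually at
least `2` along every losing color sequence, and cannot leave `Z` as long as it is below `2`. -/
structure IsResetPotential (Δ : Q → A → B → PMF Q) (col : Q → Q → K) (W : Set (ℕ → K)) (Z : Set Q)
    (L : List K → Q → ℝ≥0∞) : Prop where
  exists_action : ∀ w q, ∃ a, ∀ b, expect (Δ q a b) (fun q' => L (col q q' :: w) q') ≤ L w q
  eventually_two_le : ∀ ρ ∉ W, ∀ᶠ n in atTop, ∀ q, 2 ≤ L (res ρ n) q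
  nil_lt_one : ∀ q ∈ Z, L [] q < 1
  support_subset : ∀ w q a b, expect (Δ q a b) (fun q' => L (col q q' :: w) q') < 2 →
    (Δ q a b).support ⊆ Z

theorem exists_isResetPotential [Finite A] [Finite B] [Finite Q] [Nonempty A] [Nonempty Q]
    (htail : TailObj W) :
    ∃ L, IsResetPotential Δ col W {q | lossValue Δ col W q = 0} L := by
  have hev : ∀ᶠ c in 𝓝[>] 0, c ≠ 0 ∧ c ≤ 1 ∧ ∀ G, IsLossPotential Δ col W G → ∀ w q a b,
      expect (Δ q a b) (fun q' => G (col q q' :: w) q') < c →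
        ∀ q' ∈ (Δ q a b).support, lossValue Δ col W q' = 0 := by
    have hsafe := eventually_lossValue_eq_zero_of_lt (Δ := Δ) (col := col) htail
    filter_upwards [self_mem_nhdsWithin, mem_nhdsWithin_of_mem_nhds (Iic_mem_nhds one_pos),
      mem_nhdsWithin_of_mem_nhds hsafe] with c hc0 hc1 hsafe
    exact ⟨ne_of_gt hc0, hc1, hsafe⟩
  obtain ⟨c, hc0, hc1, hsafe⟩ := hev.exists
  have hctop : c ≠ ⊤ := (hc1.trans_lt ENNReal.one_lt_top).ne
  have hkc : 2 / c * c = 2 := ENNReal.div_mul_cancel hc0 hctop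
  have hε : 0 < c / 2 := ENNReal.half_pos hc0
  obtain ⟨G, hG, hGlt⟩ := exists_isLossPotential_forall_lt (Δ := Δ) (col := col) (W := W) hε
  refine ⟨fun w q => 2 / c * G w q, ⟨fun w q => ?_, fun ρ hρ => ?_, fun q hq => ?_, ?_⟩⟩
  · obtain ⟨a, ha⟩ := hG.exists_action w q
    refine ⟨a, fun b => ?_⟩
    rw [expect_const_mul]
    gcongr
    exact ha b
  · filter_upwards [hG.eventually_one_le ρ hρ] with n hn q
    calc (2 : ℝ≥0∞) = 2 / c * c := hkc.symm
      _ ≤ 2 / c * G (res ρ n) q := by gcongr; exact le_trans hc1 (hn q)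
  · have hlt : G [] q < 1 / (2 / c) := by
      rw [one_div, ENNReal.inv_div (.inl hctop) (.inl hc0)]
      exact hGlt q hq
    exact mul_comm (G [] q) _ ▸ ENNReal.mul_lt_of_lt_div hlt
  · intro w q a b hlt
    rw [expect_const_mul] at hlt
    nth_rw 2 [← hkc] at hlt
    exact hsafe G hG w q a b (lt_of_mul_lt_mul_left' hlt)

end LossValue

section Reset

variable {K : Type*}

/-- `ResetRun alive w n u` means that, while reading the color history `w`, a player who keeps in
memory the colors seen since her last reset can have made `n` resets and now remember `u`. She may
reset at any step, and has to as soon as her memory is no longer `alive`. -/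
inductive ResetRun (alive : List K → Prop) : List K → ℕ → List K → Prop
  | nil : ResetRun alive [] 0 []
  | reset {w n u} (k : K) : ResetRun alive w n u → ResetRun alive (k :: w) (n + 1) []
  | extend {w n u} (k : K) : ResetRun alive w n u → alive (k :: u) →
      ResetRun alive (k :: w) n (k :: u)

variable {alive : List K → Prop} {w u : List K} {n : ℕ}

theorem exists_resetRun (alive : List K → Prop) (w : List K) : ∃ n u, ResetRun alive w n u := by
  induction w with
  | nil => exact ⟨0, [], .nil⟩
  | cons k w ih =>
    obtain ⟨n, u, h⟩ := ih
    exact ⟨n + 1, [], h.reset k⟩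

theorem finite_setOf_resetRun (alive : List K → Prop) (w : List K) :
    {x : ℕ × List K | ResetRun alive w x.1 x.2}.Finite := by
  induction w with
  | nil =>
    refine (Set.finite_singleton (0, [])).subset ?_
    rintro ⟨n, u⟩ h
    cases h
    rfl
  | cons k w ih =>
    refine ((ih.image fun x => (x.1 + 1, [])).union (ih.image fun x => (x.1, k :: x.2))).subset ?_
    rintro ⟨n, u⟩ h
    cases h with
    | reset _ h => exact .inl ⟨(_, _), h, rfl⟩
    | @extend _ _ v _ h _ => exact .inr ⟨(n, v), h, rfl⟩

theorem ResetRun.eq_nil_or_alive (h : ResetRun alive w n u) : u = [] ∨ alive u := by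
  cases h with
  | nil => exact .inl rfl
  | reset => exact .inl rfl
  | extend _ _ hu => exact .inr hu

theorem ResetRun.eq_nil_or_succ (h : ResetRun alive w n u) :
    u = [] ∨ ResetRun alive w (n + 1) [] := by
  cases h with
  | nil => exact .inl rfl
  | reset => exact .inl rfl
  | extend k h _ => exact .inr (h.reset k)

theorem ResetRun.exists_eq_res {ρ : ℕ → K} {m N n₀ : ℕ}
    (hN : ∀ n ≥ n₀, ∀ m u, ResetRun alive (res ρ n) m u → N ≤ m)
    (h : ResetRun alive (res ρ n) m u) (hm : m ≤ N) :
    ∃ t ≤ n₀, ∃ d, n = t + d ∧ u = res (fun i => ρ (t + i)) d := by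
  induction n generalizing m u with
  | zero =>
    cases h
    exact ⟨0, zero_le, 0, rfl, rfl⟩
  | succ n ih =>
    rw [res_succ] at h
    cases h with
    | reset _ h =>
      have hn : n < n₀ := not_le.1 fun hn => (hN n hn _ _ h).not_gt hm
      exact ⟨n + 1, hn, 0, rfl, rfl⟩
    | extend _ h _ =>
      obtain ⟨t, ht, d, rfl, rfl⟩ := ih h hm
      exact ⟨t, ht, d + 1, rfl, rfl⟩

theorem eventually_le_of_resetRun {ρ : ℕ → K}
    (hρ : ∀ t, ∀ᶠ d in atTop, ¬alive (res (fun i => ρ (t + i)) d)) (N : ℕ) :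
    ∀ᶠ n in atTop, ∀ m u, ResetRun alive (res ρ n) m u → N ≤ m := by
  induction N with
  | zero => exact .of_forall fun _ _ _ _ => zero_le
  | succ N ih =>
    obtain ⟨n₀, hN⟩ := eventually_atTop.1 ih
    obtain ⟨D, hD⟩ := eventually_atTop.1
      ((eventually_all_finite (Set.finite_Iic n₀)).2 fun t _ => hρ t)
    filter_upwards [eventually_gt_atTop (n₀ + D)] with n hn m u h
    by_contra! hm
    obtain ⟨t, ht, d, rfl, rfl⟩ := h.exists_eq_res hN (Nat.le_of_lt_succ hm)
    have hd : D < d := by omega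
    rcases h.eq_nil_or_alive with hnil | halive
    · have hlen := congrArg List.length hnil
      simp only [res_length, List.length_nil] at hlen
      omega
    · exact hD d hd.le t ht halive

end Reset

section ResetStrategy

variable {A B Q K : Type u} {Δ : Q → A → B → PMF Q} {col : Q → Q → K} {W : Set (ℕ → K)} {Z : Set Q}
  {L : List K → Q → ℝ≥0∞} {w u : List K} {n : ℕ} {q : Q}

/-- The reset runs of a player who may keep a memory as long as `L` is below `2` in some state. -/
abbrev LowRun (L : List K → Q → ℝ≥0∞) : List K → ℕ → List K → Prop :=
  ResetRun fun u => ∃ q, L u q < 2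

/-- The least cost of a reset run, where each reset costs `1` and the memory `u` costs `L u q`. -/
noncomputable def resetCost (L : List K → Q → ℝ≥0∞) (w : List K) (q : Q) : ℝ≥0∞ :=
  ⨅ (x : ℕ × List K) (_ : LowRun L w x.1 x.2), (x.1 + L x.2 q)

theorem ResetRun.resetCost_le (h : LowRun L w n u) (q : Q) : resetCost L w q ≤ n + L u q :=
  iInf_le_of_le (n, u) (iInf_le _ h)

theorem exists_resetCost_eq (L : List K → Q → ℝ≥0∞) (w : List K) (q : Q) :
    ∃ n u, LowRun L w n u ∧ resetCost L w q = n + L u q := by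
  obtain ⟨n₀, u₀, h₀⟩ := exists_resetRun (fun u => ∃ q, L u q < 2) w
  obtain ⟨⟨n, u⟩, h, hmin⟩ := Set.exists_min_image _ (fun x : ℕ × List K => x.1 + L x.2 q)
    (finite_setOf_resetRun _ w) ⟨(n₀, u₀), h₀⟩
  exact ⟨n, u, h, (h.resetCost_le q).antisymm (le_iInf₂ hmin)⟩

theorem lt_two_of_resetCost_eq (h : LowRun L w n u) (hcost : resetCost L w q = n + L u q)
    (hq : L [] q < 1) : L u q < 2 := by
  rcases h.eq_nil_or_succ with rfl | hreset
  · exact hq.trans (by norm_num)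
  · have hle : (n : ℝ≥0∞) + L u q ≤ n + (1 + L [] q) := by
      rw [← hcost, ← add_assoc, ← Nat.cast_add_one]
      exact hreset.resetCost_le q
    calc L u q ≤ 1 + L [] q := (ENNReal.add_le_add_iff_left (ENNReal.natCast_ne_top n)).1 hle
      _ < 1 + 1 := (ENNReal.add_lt_add_iff_left ENNReal.one_ne_top).2 hq
      _ = 2 := one_add_one_eq_two

theorem ResetRun.resetCost_cons_le (h : LowRun L w n u) (k : K) (hq : L [] q < 1) :
    resetCost L (k :: w) q ≤ n + L (k :: u) q := by
  by_cases halive : ∃ q, L (k :: u) q < 2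
  · exact (h.extend k halive).resetCost_le q
  · push Not at halive
    calc resetCost L (k :: w) q ≤ (n + 1 : ℕ) + L [] q := (h.reset k).resetCost_le q
      _ = n + (1 + L [] q) := by rw [Nat.cast_add_one, add_assoc]
      _ ≤ n + (1 + 1) := by gcongr
      _ = n + 2 := by rw [one_add_one_eq_two]
      _ ≤ n + L (k :: u) q := by gcongr; exact halive q

theorem IsResetPotential.exists_action_resetCost (hL : IsResetPotential Δ col W Z L) (w : List K)
    (hq : q ∈ Z) :
    ∃ a, ∀ b, (Δ q a b).support ⊆ Z ∧
      expect (Δ q a b) (fun q' => resetCost L (col q q' :: w) q') ≤ resetCost L w q := by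
  obtain ⟨n, u, h, hcost⟩ := exists_resetCost_eq L w q
  obtain ⟨a, ha⟩ := hL.exists_action u q
  refine ⟨a, fun b => ?_⟩
  have hlow : L u q < 2 := lt_two_of_resetCost_eq h hcost (hL.nil_lt_one q hq)
  have hsafe : (Δ q a b).support ⊆ Z := hL.support_subset u q a b ((ha b).trans_lt hlow)
  refine ⟨hsafe, ?_⟩
  calc expect (Δ q a b) (fun q' => resetCost L (col q q' :: w) q')
      ≤ expect (Δ q a b) fun q' => n + L (col q q' :: u) q' :=
        expect_mono_of_support fun q' hq' =>
          h.resetCost_cons_le _ (hL.nil_lt_one q' (hsafe hq'))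
    _ = n + expect (Δ q a b) fun q' => L (col q q' :: u) q' := by rw [expect_add, expect_const]
    _ ≤ n + L u q := by gcongr; exact ha b
    _ = resetCost L w q := hcost.symm

theorem IsResetPotential.eventually_le_resetCost (hL : IsResetPotential Δ col W Z L)
    (htail : TailObj W) {ρ : ℕ → K} (hρ : ρ ∉ W) (N : ℕ) :
    ∀ᶠ n in atTop, ∀ q, N ≤ resetCost L (res ρ n) q := by
  have hdead : ∀ t, ∀ᶠ d in atTop, ¬∃ q, L (res (fun i => ρ (t + i)) d) q < 2 := fun t => by
    filter_upwards [hL.eventually_two_le _ (mt (htail.shift_mem_iff ρ t).1 hρ)] with d hd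
    simpa using hd
  filter_upwards [eventually_le_of_resetRun (alive := fun u => ∃ q, L u q < 2) hdead N] with n hn q
  refine le_iInf₂ fun x hx => ?_
  calc (N : ℝ≥0∞) ≤ x.1 := Nat.cast_le.2 (hn _ _ hx)
    _ ≤ x.1 + L x.2 q := le_self_add

/-- A function of the color history and of the current state that `σ` keeps from increasing in
expectation, and that tends to infinity along every losing color sequence. -/
structure IsDivergentPotential (Δ : Q → A → B → PMF Q) (col : Q → Q → K) (W : Set (ℕ → K))
    (σ : List K → Q → A) (Y : List K → Q → ℝ≥0∞) : Prop where
  expect_le : ∀ w q b, expect (Δ q (σ w q) b) (fun q' => Y (col q q' :: w) q') ≤ Y w q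
  eventually_le : ∀ ρ ∉ W, ∀ N : ℕ, ∀ᶠ n in atTop, ∀ q, N ≤ Y (res ρ n) q

theorem IsResetPotential.exists_isDivergentPotential [Nonempty A]
    (hL : IsResetPotential Δ col W Z L) (htail : TailObj W) {q0 : Q} (hq0 : q0 ∈ Z) :
    ∃ σ Y, IsDivergentPotential Δ col W σ Y ∧ Y [] q0 ≠ ⊤ := by
  let Y : List K → Q → ℝ≥0∞ := fun w q => if q ∈ Z then resetCost L w q else ⊤
  have haction : ∀ w q, ∃ a, ∀ b,
      expect (Δ q a b) (fun q' => Y (col q q' :: w) q') ≤ Y w q := fun w q => by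
    by_cases hq : q ∈ Z
    · obtain ⟨a, ha⟩ := hL.exists_action_resetCost w hq
      refine ⟨a, fun b => (expect_mono_of_support fun q' hq' => ?_).trans ((ha b).2.trans_eq ?_)⟩
      · exact (if_pos ((ha b).1 hq')).le
      · exact (if_pos hq).symm
    · exact ⟨Classical.arbitrary A, fun b => by simp [Y, hq]⟩
  choose σ hσ using haction
  refine ⟨σ, Y, ⟨hσ, fun ρ hρ N => ?_⟩, ne_of_lt ?_⟩
  · filter_upwards [hL.eventually_le_resetCost htail hρ N] with n hn q
    simp only [Y]
    split_ifs
    exacts [hn q, le_top]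
  · calc Y [] q0 = resetCost L [] q0 := if_pos hq0
      _ ≤ (0 : ℕ) + L [] q0 := ResetRun.nil.resetCost_le q0
      _ < ⊤ := by simpa using (hL.nil_lt_one q0 hq0).trans ENNReal.one_lt_top

end ResetStrategy

section PlayMeasure

variable {A B Q K : Type u} {Δ : Q → A → B → PMF Q} {q0 : Q}

attribute [local instance] BorelSeq

/-- The law of the next state after a history (most recent state first) when the players follow
`tA` and `tB`. From the empty history the play moves to the initial state `q0`. -/
noncomputable def playKernel (Δ : Q → A → B → PMF Q) (q0 : Q) (tA : List Q → Q → PMF A)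
    (tB : List Q → Q → PMF B) : List Q → PMF Q
  | [] => PMF.pure q0
  | q :: r => (tA r.reverse q).bind fun a => (tB r.reverse q).bind fun b => Δ q a b

theorem playKernel_swap (Δ : Q → A → B → PMF Q) (q0 : Q) (tA : List Q → Q → PMF A)
    (tB : List Q → Q → PMF B) (h : List Q) :
    playKernel (fun q b a => Δ q a b) q0 tB tA h = playKernel Δ q0 tA tB h := by
  cases h with
  | nil => rfl
  | cons q r => exact PMF.bind_comm _ _ _

theorem playKernel_apply_cons [Fintype A] [Fintype B] (tA : List Q → Q → PMF A)
    (tB : List Q → Q → PMF B) (q : Q) (r : List Q) (q' : Q) :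
    playKernel Δ q0 tA tB (q :: r) q' =
      ∑ a : A, ∑ b : B, tA r.reverse q a * tB r.reverse q b * Δ q a b q' := by
  simp only [playKernel, PMF.bind_apply, tsum_fintype, Finset.mul_sum, mul_assoc]

theorem histOf_eq_reverse_res (x : ℕ → Q) {k : ℕ} (i : Fin k) :
    histOf (fun j : Fin (k + 1) => x j) i = (res x i).reverse := by
  rw [reverse_res]
  rfl

/-- `P tA tB` is the law of the play in which the players follow `tA` and `tB`. -/
def IsPlayMeasure (Δ : Q → A → B → PMF Q) (q0 : Q)
    (P : (List Q → Q → PMF A) → (List Q → Q → PMF B) → Measure (ℕ → Q)) : Prop :=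
  ∀ tA tB, IsTrajectoryMeasure (playKernel Δ q0 tA tB) (P tA tB)

theorem measure_histCyl_res_succ [Fintype A] [Fintype B] {μ : Measure (ℕ → Q)}
    {tA : List Q → Q → PMF A} {tB : List Q → Q → PMF B}
    (hμ : ∀ (k : ℕ) (π : Fin (k + 1) → Q),
      μ (Cyl (List.ofFn π)) =
        if π 0 = q0 then
          ∏ i : Fin k, ∑ a : A, ∑ b : B,
            tA (histOf π i) (π i.castSucc) a * tB (histOf π i) (π i.castSucc) b *
              Δ (π i.castSucc) a b (π i.succ)
        else 0) (x : ℕ → Q) (k : ℕ) :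
    μ (histCyl (res x (k + 1))) =
      if x 0 = q0 then
        ∏ i ∈ Finset.range k, playKernel Δ q0 tA tB (res x (i + 1)) (x (i + 1))
      else 0 := by
  have hcyl : histCyl (res x (k + 1)) = Cyl (List.ofFn fun j : Fin (k + 1) => x j) := by
    rw [Cyl_eq_histCyl, ← reverse_res, List.reverse_reverse]
  rw [hcyl, hμ, ← Fin.prod_univ_eq_prod_range
    (fun i => playKernel Δ q0 tA tB (res x (i + 1)) (x (i + 1))) k]
  simp only [histOf_eq_reverse_res, res_succ, playKernel_apply_cons]
  rfl

theorem isPlayMeasure_of_Cyl [Fintype A] [Fintype B]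
    {P : (List Q → Q → PMF A) → (List Q → Q → PMF B) → Measure (ℕ → Q)}
    (hprob : ∀ tA tB, P tA tB Set.univ = 1)
    (hP : ∀ (tA : List Q → Q → PMF A) (tB : List Q → Q → PMF B) (k : ℕ) (π : Fin (k + 1) → Q),
      P tA tB (Cyl (List.ofFn π)) =
        if π 0 = q0 then
          ∏ i : Fin k, ∑ a : A, ∑ b : B,
            tA (histOf π i) (π i.castSucc) a * tB (histOf π i) (π i.castSucc) b *
              Δ (π i.castSucc) a b (π i.succ)
        else 0) :
    IsPlayMeasure Δ q0 P := by
  refine fun tA tB => ⟨hprob tA tB, fun h q => ?_⟩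
  have : Nonempty Q := ⟨q0⟩
  obtain ⟨x, hx⟩ := exists_res_eq (q :: h)
  obtain ⟨rfl, hh⟩ := List.cons.inj hx
  generalize h.length = n at hh
  subst hh
  rw [← res_succ, measure_histCyl_res_succ (hP tA tB)]
  cases n with
  | zero => simp [histCyl_nil, hprob, playKernel, PMF.pure_apply]
  | succ n =>
    rw [measure_histCyl_res_succ (hP tA tB), Finset.prod_range_succ, ite_mul, zero_mul]

namespace IsPlayMeasure

variable {P : (List Q → Q → PMF A) → (List Q → Q → PMF B) → Measure (ℕ → Q)}

theorem swap (hP : IsPlayMeasure Δ q0 P) :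
    IsPlayMeasure (fun q b a => Δ q a b) q0 fun tB tA => P tA tB := fun tB tA => by
  rw [funext (playKernel_swap Δ q0 tA tB)]
  exact hP tA tB

theorem capacity_responseKernel_le [Finite B] [Nonempty B] [Countable Q] {E : Set (ℕ → Q)}
    (hP : IsPlayMeasure Δ q0 P) (hE : MeasurableSet E) {s : List Q → Q → A} {ε : ℝ≥0∞}
    (hε : ∀ tB, P (fun h q => PMF.pure (s h q)) tB E ≤ ε) :
    capacity (responseKernel Δ q0 s) E [] ≤ ε := by
  refine capacity_le_of_forall_measure_le hE fun t => ?_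
  let tB : List Q → Q → PMF B := fun h q => PMF.pure (t (q :: h.reverse))
  have hkernel : ∀ h, playKernel Δ q0 (fun h q => PMF.pure (s h q)) tB h =
      responseKernel Δ q0 s h (t h)
    | [] => rfl
    | q :: r => by simp [playKernel, responseKernel, tB]
  exact ⟨_, funext hkernel ▸ hP _ tB, hε tB⟩

theorem measure_compl_eq_zero_of_isDivergentPotential [Countable Q] {col : Q → Q → K}
    {W : Set (ℕ → K)} {σ : List K → Q → A} {Y : List K → Q → ℝ≥0∞} (hP : IsPlayMeasure Δ q0 P)
    (hY : IsDivergentPotential Δ col W σ Y) (hfin : Y [] q0 ≠ ⊤) (tB : List Q → Q → PMF B) :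
    P (toStratA col fun c q => σ c.reverse q) tB (UW col W)ᶜ = 0 := by
  let φ : List Q → ℝ≥0∞
    | [] => Y [] q0
    | q :: r => Y (revColors col (q :: r)) q
  refine (hP _ tB).measure_eq_zero_of_tendsto_top (φ := φ) (fun h => ?_) hfin fun x hx => ?_
  · cases h with
    | nil => exact (expect_pure q0 fun q => φ [q]).le
    | cons q r =>
      simp only [playKernel, toStratA, colHist_reverse, List.reverse_reverse, PMF.pure_bind,
        expect_bind]
      exact (expect_mono fun b => hY.expect_le _ q b).trans_eq (expect_const _ _)
  · refine (tendsto_add_atTop_iff_nat 1).1 (ENNReal.tendsto_nhds_top_iff_nat.2 fun N => ?_)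
    filter_upwards [hY.eventually_le _ hx (N + 1)] with n hn
    calc (N : ℝ≥0∞) < (N + 1 : ℕ) := Nat.cast_lt.2 N.lt_succ_self
      _ ≤ Y (res (colorSeq col x) n) (x n) := hn (x n)
      _ = φ (res x (n + 1)) := by rw [← revColors_res]; rfl

theorem lossValue_eq_zero [Finite B] [Nonempty A] [Nonempty B] [Finite Q] {col : Q → Q → K}
    {W : Set (ℕ → K)} (hP : IsPlayMeasure Δ q0 P) (hW : MeasurableSet W)
    (h : ∀ ε > 0, ∃ sA, ∀ tB, P (toStratA col sA) tB (UW col W)ᶜ ≤ ε) :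
    lossValue Δ col W q0 = 0 := by
  refine nonpos_iff_eq_zero.1 (le_of_forall_gt fun c hc => ?_)
  obtain ⟨ε, hε, hεc⟩ := exists_between hc
  obtain ⟨sA, hsA⟩ := h ε hε
  obtain ⟨G, hG, hlt⟩ := exists_isLossPotential_lt
    ((hP.capacity_responseKernel_le (measurableSet_UW col hW).compl hsA).trans_lt hεc)
  exact (iInf₂_le G hG).trans_lt hlt

theorem exists_forall_measure_compl_eq_zero [Finite A] [Finite B] [Finite Q] [Nonempty A]
    [Nonempty B] {col : Q → Q → K} {W : Set (ℕ → K)} (hP : IsPlayMeasure Δ q0 P)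
    (hW : MeasurableSet W) (htail : TailObj W)
    (h : ∀ ε > 0, ∃ sA, ∀ tB, P (toStratA col sA) tB (UW col W)ᶜ ≤ ε) :
    ∃ sA, ∀ tB, P (toStratA col sA) tB (UW col W)ᶜ = 0 := by
  have : Nonempty Q := ⟨q0⟩
  obtain ⟨L, hL⟩ := exists_isResetPotential (Δ := Δ) (col := col) htail
  obtain ⟨σ, Y, hY, hfin⟩ := hL.exists_isDivergentPotential htail (hP.lossValue_eq_zero hW h)
  exact ⟨_, hP.measure_compl_eq_zero_of_isDivergentPotential hY hfin⟩

end IsPlayMeasure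

end PlayMeasure

section Determinacy

variable {A B Q K : Type u} {Δ : Q → A → B → PMF Q} {q0 : Q} {col : Q → Q → K} {W : Set (ℕ → K)}

attribute [local instance] BorelSeq

variable {P : (List Q → Q → PMF A) → (List Q → Q → PMF B) → Measure (ℕ → Q)} {U : Set (ℕ → Q)}

theorem valA_le_valB : valA col P U ≤ valB col P U :=
  iSup_le fun sA => le_iInf fun sB => (iInf_le _ (toStratB col sB)).trans
    (le_iSup (fun tA => P tA (toStratB col sB) U) (toStratA col sA))

theorem valSB_le_one (hprob : ∀ tA tB, P tA tB Set.univ = 1) (sB : List K → Q → B) :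
    valSB col P U sB ≤ 1 :=
  iSup_le fun tA => (measure_mono (Set.subset_univ U)).trans (hprob tA _).le

theorem exists_measure_compl_le_of_valA_eq_one (hprob : ∀ tA tB, P tA tB Set.univ = 1)
    (hU : MeasurableSet U) (hval : valA col P U = 1) {ε : ℝ≥0∞} (hε : 0 < ε) :
    ∃ sA, ∀ tB, P (toStratA col sA) tB Uᶜ ≤ ε := by
  obtain ⟨sA, hsA⟩ : ∃ sA, 1 - ε < valSA col P U sA :=
    
    lt_iSup_iff.1 <| (ENNReal.sub_lt_self ENNReal.one_ne_top one_ne_zero hε.ne').trans_eq hval.symm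
  refine ⟨sA, fun tB => ?_⟩
  have : IsProbabilityMeasure (P (toStratA col sA) tB) := ⟨hprob _ _⟩
  rw [prob_compl_eq_one_sub hU]
  exact tsub_le_iff_tsub_le.1 (hsA.le.trans (iInf_le _ tB))

theorem exists_valSA_eq_one [Finite A] [Finite B] [Finite Q] [Nonempty A] [Nonempty B]
    (hP : IsPlayMeasure Δ q0 P) (hW : MeasurableSet W) (htail : TailObj W)
    (hval : valA col P (UW col W) = 1) : ∃ sA, valSA col P (UW col W) sA = 1 := by
  have hprob : ∀ tA tB, P tA tB Set.univ = 1 := fun tA tB => (hP tA tB).measure_univ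
  have hU := measurableSet_UW col hW
  obtain ⟨sA, hsA⟩ := hP.exists_forall_measure_compl_eq_zero hW htail fun ε hε =>
    exists_measure_compl_le_of_valA_eq_one hprob hU hval hε
  refine ⟨sA, ?_⟩
  have hone : ∀ tB, P (toStratA col sA) tB (UW col W) = 1 := fun tB => by
    have : IsProbabilityMeasure (P (toStratA col sA) tB) := ⟨hprob _ _⟩
    exact (prob_compl_eq_zero_iff hU).1 (hsA tB)
  have : Nonempty (List Q → Q → PMF B) := ⟨fun _ _ => PMF.pure (Classical.arbitrary B)⟩
  simp only [valSA, hone, iInf_const]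

theorem exists_valSB_eq_zero [Finite A] [Finite B] [Finite Q] [Nonempty A] [Nonempty B]
    (hP : IsPlayMeasure Δ q0 P) (hW : MeasurableSet W) (htail : TailObj W)
    (hval : valB col P (UW col W) = 0) : ∃ sB, valSB col P (UW col W) sB = 0 := by
  have hcompl : (UW col Wᶜ)ᶜ = UW col W := compl_compl (UW col W)
  obtain ⟨sB, hsB⟩ := hP.swap.exists_forall_measure_compl_eq_zero (col := col) hW.compl
    (fun ρ w => not_congr (htail ρ w)) fun ε hε => by
      obtain ⟨sB, hsB⟩ : ∃ sB, valSB col P (UW col W) sB < ε := iInf_lt_iff.1 (hval.trans_lt hε)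
      exact ⟨sB, fun tA => hcompl ▸ (le_iSup (fun tA => P tA _ _) tA).trans hsB.le⟩
  exact ⟨sB, nonpos_iff_eq_zero.1 (iSup_le fun tA => hcompl ▸ (hsB tA).le)⟩

theorem stmt19_general [Fintype A] [Fintype B] [Finite Q] [Nonempty A] [Nonempty B]
    (q0 : Q) (Δ : Q → A → B → PMF Q) (col : Q → Q → K)
    (W : Set (ℕ → K)) (hW : MeasurableSet W) (htail : TailObj W)
    (P : (List Q → Q → PMF A) → (List Q → Q → PMF B) → Measure (ℕ → Q))
    (hprob : ∀ tA tB, P tA tB Set.univ = 1)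
    (hP : ∀ (tA : List Q → Q → PMF A) (tB : List Q → Q → PMF B) (k : ℕ) (π : Fin (k + 1) → Q),
      P tA tB (Cyl (List.ofFn π)) =
        if π 0 = q0 then
          ∏ i : Fin k, ∑ a : A, ∑ b : B,
            tA (histOf π i) (π i.castSucc) a * tB (histOf π i) (π i.castSucc) b *
              Δ (π i.castSucc) a b (π i.succ)
        else 0)
    (hval : valA col P (UW col W) = 1 ∨ valB col P (UW col W) = 0) :
    valA col P (UW col W) = valB col P (UW col W) ∧
    (∃ sA : List K → Q → A, valSA col P (UW col W) sA = valA col P (UW col W)) ∧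
    (∃ sB : List K → Q → B, valSB col P (UW col W) sB = valB col P (UW col W)) := by
  have hplay : IsPlayMeasure Δ q0 P := isPlayMeasure_of_Cyl hprob hP
  have hle : valA col P (UW col W) ≤ valB col P (UW col W) := valA_le_valB
  rcases hval with hA | hB
  · obtain ⟨sA, hsA⟩ := exists_valSA_eq_one hplay hW htail hA
    let sB : List K → Q → B := fun _ _ => Classical.arbitrary B
    have hsB : valSB col P (UW col W) sB ≤ 1 := valSB_le_one hprob sB
    have hB : valB col P (UW col W) = 1 := ((iInf_le _ sB).trans hsB).antisymm (hA ▸ hle)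
    exact ⟨hA.trans hB.symm, ⟨sA, hsA.trans hA.symm⟩, sB, (hsB.trans hB.ge).antisymm (iInf_le _ sB)⟩
  · obtain ⟨sB, hsB⟩ := exists_valSB_eq_zero hplay hW htail hB
    have hA : valA col P (UW col W) = 0 := nonpos_iff_eq_zero.1 (hB ▸ hle)
    refine ⟨hA.trans hB.symm, ⟨fun _ _ => Classical.arbitrary A, ?_⟩, sB, hsB.trans hB.symm⟩
    exact (le_iSup (valSA col P (UW col W)) _).antisymm (hA.le.trans zero_le)

end Determinacy

/-- Determinacy of finite locally determined stochastic concurrent games with a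
Borel tail objective and extreme value: if `val_A = 1` or `val_B = 0`, then the
game is determined (the values coincide and are attained by color strategies).
Here `P tA tB` is the probability measure on plays induced by the state strategies
`tA, tB`, axiomatized by its (characterizing) values on cylinder sets. -/
theorem stmt19 {A B Q D K : Type}
    [Fintype A] [Fintype B] [Fintype Q] [Fintype D]
    [Nonempty A] [Nonempty B] [Nonempty Q] [Nonempty D] [Nonempty K]
    (q0 : Q) (δ : Q → A → B → D) (dist : D → PMF Q) (col : Q → Q → K)
    (W : Set (ℕ → K)) (hW : MeasurableSet[BorelSeq K] W) (htail : TailObj W)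
    (hloc : ∀ q : Q, GFDetermined (δ q))
    (P : (List Q → Q → PMF A) → (List Q → Q → PMF B) →
      @Measure (ℕ → Q) (BorelSeq Q))
    (hprob : ∀ tA tB, P tA tB Set.univ = 1)
    (hP : ∀ (tA : List Q → Q → PMF A) (tB : List Q → Q → PMF B)
        (k : ℕ) (π : Fin (k + 1) → Q),
      P tA tB (Cyl (List.ofFn π)) =
        if π 0 = q0 then
          ∏ i : Fin k, ∑ a : A, ∑ b : B,
            tA (histOf π i) (π i.castSucc) a * tB (histOf π i) (π i.castSucc) b *
              dist (δ (π i.castSucc) a b) (π i.succ)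
        else 0)
    (hval : valA col P (UW col W) = 1 ∨ valB col P (UW col W) = 0) :
    valA col P (UW col W) = valB col P (UW col W) ∧
    (∃ sA : List K → Q → A,
      valSA col P (UW col W) sA = valA col P (UW col W)) ∧
    (∃ sB : List K → Q → B,
      valSB col P (UW col W) sB = valB col P (UW col W)) :=
  stmt19_general q0 (fun q a b => dist (δ q a b)) col W hW htail P hprob hP hval
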